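/- arXiv:2209.03658 — 3 statements merged into one kernel-verified Lean document; each statement's English description precedes it below -/
import Mathlib

section
/- Let V : ℝ → ℝ be Borel measurable, locally integrable and nonnegative almost everywhere. Then for every k ≥ 1 the infimal k-partition energy of the real line satisfies Δ*_k(ℝ) ≤ Σ_V; equivalently, for every real λ > Σ_V there exists a k-partition P of ℝ with energy Δ(P) ≤ λ. (This is the paper's Theorem 1.2 for the metric graph G = ℝ.) -/
open MeasureTheory Set Filter Topology
open scoped ENNReal

/-- Rayleigh quotient of a test function `f` for the Schrödinger form with potential `V`. -/
noncomputable def rayleigh (V : ℝ → ℝ) (f : ℝ → ℝ) : ℝ :=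
  (∫ x, ((deriv f x) ^ 2 + V x * (f x) ^ 2)) / (∫ x, (f x) ^ 2)

/-- `f` is an admissible test function for the closed set `S`: continuously differentiable,
not identically zero, with compact support contained in `S`. -/
def TestFor (S : Set ℝ) (f : ℝ → ℝ) : Prop :=
  ContDiff ℝ 1 f ∧ f ≠ 0 ∧ HasCompactSupport f ∧ tsupport f ⊆ S

/-- Dirichlet ground state energy `λ_V(S)`, with `sInf ∅ = ∞`. -/
noncomputable def lambdaV (V : ℝ → ℝ) (S : Set ℝ) : ℝ≥0∞ :=
  sInf {e : ℝ≥0∞ | ∃ f : ℝ → ℝ, TestFor S f ∧ e = ENNReal.ofReal (rayleigh V f)}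

/-- `Σ_V`, the infimum of the essential spectrum of `-d²/dx² + V` on `ℝ`, characterized
Persson-style as `sup_{R>0} λ_V({|x| ≥ R})`. -/
noncomputable def SigmaV (V : ℝ → ℝ) : ℝ≥0∞ :=
  ⨆ R : ℝ, ⨆ _ : 0 < R, lambdaV V {x : ℝ | R ≤ |x|}

/-- A `k`-partition of `ℝ`: `k` closed connected subsets with nonempty interior whose
pairwise intersections are contained in both frontiers. -/
def IsPartitionR (k : ℕ) (G : Fin k → Set ℝ) : Prop :=
  (∀ i, IsClosed (G i)) ∧ (∀ i, IsConnected (G i)) ∧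
    (∀ i, (interior (G i)).Nonempty) ∧
    ∀ i j, i ≠ j → G i ∩ G j ⊆ frontier (G i) ∩ frontier (G j)

/-- The energy `Δ(P)` of a partition: the maximum of the ground state energies. -/
noncomputable def energyR (V : ℝ → ℝ) {k : ℕ} (G : Fin k → Set ℝ) : ℝ≥0∞ :=
  ⨆ i, lambdaV V (G i)

/-- The infimal `k`-partition energy `Δ*_k(ℝ)`. -/
noncomputable def optEnergyR (V : ℝ → ℝ) (k : ℕ) : ℝ≥0∞ :=
  ⨅ G : {G : Fin k → Set ℝ // IsPartitionR k G}, energyR V G.1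

theorem piece_facts {f : ℝ → ℝ} (hf : ContDiff ℝ 1 f) {T U : Set ℝ} (hT : IsOpen T)
    (hU : IsOpen U) (hd : Disjoint T U) (hs : tsupport f ⊆ T ∪ U) :
    ContDiff ℝ 1 (T.indicator f) ∧ tsupport (T.indicator f) ⊆ tsupport f ∩ T ∧
      ∀ x, deriv (T.indicator f) x = T.indicator (deriv f) x := by
  have h1 : ∀ x ∈ T, T.indicator f =ᶠ[𝓝 x] f := by
    intro x hx
    filter_upwards [hT.mem_nhds hx] with y hy
    exact indicator_of_mem hy f
  have h2 : ∀ x, x ∉ T → T.indicator f =ᶠ[𝓝 x] 0 := by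
    intro x hx
    by_cases hxs : x ∈ tsupport f
    · have hxU : x ∈ U := (hs hxs).resolve_left hx
      filter_upwards [hU.mem_nhds hxU] with y hy
      exact indicator_of_notMem (fun h => hd.le_bot ⟨h, hy⟩) f
    · filter_upwards [notMem_tsupport_iff_eventuallyEq.mp hxs] with y hy
      by_cases hyT : y ∈ T
      · rw [indicator_of_mem hyT, hy]
      · exact indicator_of_notMem hyT f
  refine ⟨?_, ?_, ?_⟩
  · rw [contDiff_iff_contDiffAt]
    intro x
    by_cases hx : x ∈ T
    · exact hf.contDiffAt.congr_of_eventuallyEq (h1 x hx)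
    · exact (contDiff_const (c := (0 : ℝ))).contDiffAt.congr_of_eventuallyEq (h2 x hx)
  · intro x hx
    refine ⟨closure_mono ?_ hx, ?_⟩
    · rw [Set.support_indicator]
      exact inter_subset_right
    · by_contra hxT
      exact notMem_tsupport_iff_eventuallyEq.mpr (h2 x hxT) hx
  · intro x
    by_cases hx : x ∈ T
    · rw [(h1 x hx).deriv_eq, indicator_of_mem hx]
    · rw [(h2 x hx).deriv_eq, indicator_of_notMem hx]
      exact deriv_const x 0

theorem exists_piece {V : ℝ → ℝ} (hloc : LocallyIntegrable V) {f : ℝ → ℝ}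
    (hf : ContDiff ℝ 1 f) (hf0 : f ≠ 0) (hc : HasCompactSupport f)
    {T U : Set ℝ} (hT : IsOpen T)
    (hU : IsOpen U) (hd : Disjoint T U) (hs : tsupport f ⊆ T ∪ U) {c : ℝ}
    (hc0 : 0 ≤ c) (hr : rayleigh V f < c) :
    ∃ g, (TestFor (tsupport f ∩ T) g ∨ TestFor (tsupport f ∩ U) g) ∧ rayleigh V g ≤ c := by
  have hfc : Continuous f := hf.continuous
  have hdc : Continuous (deriv f) := hf.continuous_deriv le_rfl
  have hB : 0 < ∫ x, (f x) ^ 2 := by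
    obtain ⟨x, hx⟩ := Function.ne_iff.mp hf0
    refine Continuous.integral_pos_of_hasCompactSupport_nonneg_nonzero (x := x)
      (hfc.pow 2) ?_ (fun y => sq_nonneg _) (pow_ne_zero 2 hx)
    exact hc.comp_left (g := fun y : ℝ => y ^ 2) (by simp)
  have hcs2 : HasCompactSupport (fun x => (f x) ^ 2) :=
    hc.comp_left (g := fun y : ℝ => y ^ 2) (by simp)
  have hcd2 : HasCompactSupport (fun x => (deriv f x) ^ 2) :=
    hc.deriv.comp_left (g := fun y : ℝ => y ^ 2) (by simp)
  have hi2 : Integrable (fun x => (f x) ^ 2) :=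
    (hfc.pow 2).integrable_of_hasCompactSupport hcs2
  have hiA : Integrable (fun x => (deriv f x) ^ 2 + V x * (f x) ^ 2) := by
    refine ((hdc.pow 2).integrable_of_hasCompactSupport hcd2).add ?_
    have := hloc.integrable_smul_left_of_hasCompactSupport (hfc.pow 2) hcs2
    refine this.congr (Eventually.of_forall fun x => ?_)
    simp [mul_comm]
  have split : ∀ F : ℝ → ℝ, Integrable F → (∀ x, x ∉ T ∪ U → F x = 0) →
      ∫ x, F x = (∫ x in T, F x) + ∫ x in U, F x := by
    intro F hF h0
    rw [← setIntegral_union hd hU.measurableSet hF.integrableOn hF.integrableOn,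
      setIntegral_eq_integral_of_forall_compl_eq_zero h0]
  have hz : ∀ x, x ∉ T ∪ U → f x = 0 := fun x hx =>
    image_eq_zero_of_notMem_tsupport fun h => hx (hs h)
  have hzd : ∀ x, x ∉ T ∪ U → deriv f x = 0 := fun x hx =>
    image_eq_zero_of_notMem_tsupport fun h => hx (hs (tsupport_deriv_subset h))
  have sA := split _ hiA (fun x hx => by simp [hz x hx, hzd x hx])
  have sB := split _ hi2 (fun x hx => by simp [hz x hx])
  have key : ∀ {T U : Set ℝ}, IsOpen T → IsOpen U → Disjoint T U → tsupport f ⊆ T ∪ U →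
      (∫ x in T, ((deriv f x) ^ 2 + V x * (f x) ^ 2)) < c * ∫ x in T, (f x) ^ 2 →
      ∃ g, TestFor (tsupport f ∩ T) g ∧ rayleigh V g ≤ c := by
    intro T U hT hU hd hs hlt
    obtain ⟨p1, p2, p3⟩ := piece_facts hf hT hU hd hs
    refine ⟨T.indicator f, ⟨p1, ?_, ?_, p2⟩, ?_⟩
    · intro h0
      have hz : ∀ x ∈ T, f x = 0 := fun x hx => by
        have := congrFun h0 x
        rwa [indicator_of_mem hx] at this
      have hz' : ∀ x ∈ T, deriv f x = 0 := fun x hx => by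
        have := p3 x
        rw [indicator_of_mem hx, h0] at this
        rw [← this]
        exact deriv_const x 0
      rw [setIntegral_eq_zero_of_forall_eq_zero (fun x hx => by simp [hz x hx, hz' x hx]),
        setIntegral_eq_zero_of_forall_eq_zero (fun x hx => by simp [hz x hx])] at hlt
      simp at hlt
    · exact hc.of_isClosed_subset (isClosed_tsupport _) (p2.trans inter_subset_left)
    · unfold rayleigh
      have e1 : (∫ x, ((deriv (T.indicator f) x) ^ 2 + V x * (T.indicator f x) ^ 2)) =
          ∫ x in T, ((deriv f x) ^ 2 + V x * (f x) ^ 2) := by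
        rw [← integral_indicator hT.measurableSet]
        congr 1
        ext x
        rw [p3]
        by_cases hx : x ∈ T <;> simp [hx]
      have e2 : (∫ x, (T.indicator f x) ^ 2) = ∫ x in T, (f x) ^ 2 := by
        rw [← integral_indicator hT.measurableSet]
        congr 1
        ext x
        by_cases hx : x ∈ T <;> simp [hx]
      rw [e1, e2]
      exact div_le_of_le_mul₀ (integral_nonneg fun x => sq_nonneg _) hc0 hlt.le
  have hlt := (div_lt_iff₀ hB).mp hr
  rw [sA, sB, mul_add] at hlt
  by_cases h : (∫ x in T, ((deriv f x) ^ 2 + V x * (f x) ^ 2)) < c * ∫ x in T, (f x) ^ 2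
  · obtain ⟨g, h1, h2⟩ := key hT hU hd hs h
    exact ⟨g, Or.inl h1, h2⟩
  · obtain ⟨g, h1, h2⟩ := key hU hT hd.symm (by rwa [union_comm]) (by linarith)
    exact ⟨g, Or.inr h1, h2⟩

theorem TestFor.mono {S S' : Set ℝ} {f : ℝ → ℝ} (h : TestFor S f) (hS : S ⊆ S') :
    TestFor S' f := ⟨h.1, h.2.1, h.2.2.1, h.2.2.2.trans hS⟩

theorem exists_interval {V : ℝ → ℝ} (hloc : LocallyIntegrable V) {c : NNReal}
    (h : SigmaV V < c) (R : ℝ) (hR : 0 < R) :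
    ∃ M a b : ℝ, R < M ∧ a < b ∧ (∀ x ∈ Icc a b, R ≤ |x| ∧ |x| < M) ∧
      lambdaV V (Icc a b) ≤ c := by
  have h1 : lambdaV V {x : ℝ | R ≤ |x|} < c :=
    (le_iSup₂ (f := fun (R : ℝ) (_ : 0 < R) => lambdaV V {x : ℝ | R ≤ |x|}) R hR).trans_lt h
  obtain ⟨e, ⟨f, ⟨hf, hf0, hc, hs⟩, rfl⟩, he⟩ := sInf_lt_iff.mp h1
  have hr : rayleigh V f < c := by
    rw [← ENNReal.ofReal_coe_nnreal] at he
    exact (ENNReal.ofReal_lt_ofReal_iff').mp he |>.1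
  obtain ⟨M, hM⟩ := hc.isCompact.isBounded.subset_closedBall (0 : ℝ)
  have hM' : ∀ x ∈ tsupport f, |x| ≤ M := fun x hx => by simpa using hM hx
  obtain ⟨g, hg, hgr⟩ := exists_piece (T := Ioi 0) (U := Iio 0) hloc hf hf0 hc isOpen_Ioi isOpen_Iio
    (by
      rw [Set.disjoint_left]
      intro x hx hx'
      exact lt_asymm (mem_Ioi.mp hx) (mem_Iio.mp hx'))
    (by
      intro x hx
      have h2 : R ≤ |x| := hs hx
      rcases lt_trichotomy x 0 with h | h | h
      · exact Or.inr h
      · subst h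
        simp at h2
        linarith
      · exact Or.inl h) c.2 hr
  have fin : ∀ S, TestFor S g → lambdaV V S ≤ c := fun S hS => by
    have h0 : lambdaV V S ≤ ENNReal.ofReal (rayleigh V g) := sInf_le ⟨g, hS, rfl⟩
    refine h0.trans ?_
    rw [← ENNReal.ofReal_coe_nnreal]
    exact ENNReal.ofReal_le_ofReal hgr
  have hmax := le_max_left M (R + 1)
  have hmax' := le_max_right M (R + 1)
  set N := max M (R + 1)
  rcases hg with hg | hg
  · refine ⟨N + 1, R, N, by linarith, by linarith, ?_, fin _ (hg.mono ?_)⟩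
    · rintro x ⟨hx1, hx2⟩
      rw [abs_of_nonneg (by linarith)]
      constructor <;> linarith
    · rintro x ⟨hx, hx0⟩
      have a1 := hM' x hx
      have a2 : R ≤ |x| := hs hx
      rw [mem_Ioi] at hx0
      rw [abs_of_pos hx0] at a1 a2
      constructor <;> linarith
  · refine ⟨N + 1, -N, -R, by linarith, by linarith, ?_, fin _ (hg.mono ?_)⟩
    · rintro x ⟨hx1, hx2⟩
      rw [abs_of_nonpos (by linarith)]
      constructor <;> linarith
    · rintro x ⟨hx, hx0⟩
      have a1 := hM' x hx
      have a2 : R ≤ |x| := hs hx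
      rw [mem_Iio] at hx0
      rw [abs_of_neg hx0] at a1 a2
      constructor <;> linarith

/-- **Theorem 1.2 for `G = ℝ`.** For every `k ≥ 1`, the infimal `k`-partition energy of the
real line is at most the infimum of the essential spectrum: `Δ*_k(ℝ) ≤ Σ_V`. -/
theorem optEnergy_le_sigma (V : ℝ → ℝ) (hmeas : Measurable V)
    (hloc : LocallyIntegrable V) (hpos : ∀ᵐ x ∂(volume : Measure ℝ), 0 ≤ V x) :
    ∀ k : ℕ, 1 ≤ k → optEnergyR V k ≤ SigmaV V := by
  intro k _
  refine le_of_forall_gt fun lam hlam => ?_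
  obtain ⟨c, hc1, hc2⟩ := ENNReal.lt_iff_exists_nnreal_btwn.mp hlam
  refine lt_of_le_of_lt ?_ hc2
  have hex : ∀ R : {R : ℝ // 0 < R}, ∃ (M : {R : ℝ // 0 < R}) (a b : ℝ), R.1 < M.1 ∧ a < b ∧
      (∀ x ∈ Icc a b, R.1 ≤ |x| ∧ |x| < M.1) ∧ lambdaV V (Icc a b) ≤ c := by
    rintro ⟨R, hR⟩
    obtain ⟨M, a, b, h1, h2⟩ := exists_interval hloc hc1 R hR
    exact ⟨⟨M, hR.trans h1⟩, a, b, h1, h2⟩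
  choose M a b hM hab hx hl using hex
  let r : ℕ → {R : ℝ // 0 < R} := fun n => M^[n] ⟨1, one_pos⟩
  have hrs : ∀ n, r (n + 1) = M (r n) := fun n => Function.iterate_succ_apply' M n _
  have hmono : StrictMono r := strictMono_nat_of_lt_succ fun n => by
    rw [hrs]
    exact hM (r n)
  let G : Fin k → Set ℝ := fun i => Icc (a (r i)) (b (r i))
  have hlt : ∀ i j : Fin k, i < j → ∀ x ∈ G i, x ∉ G j := by
    intro i j hij x hi hj
    have h1 := (hx _ x hi).2
    have h2 := (hx _ x hj).1
    rw [← hrs] at h1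
    have h3 : (r (i + 1)).1 ≤ (r j).1 := hmono.monotone (Nat.succ_le_of_lt hij)
    linarith
  have hG : IsPartitionR k G := by
    refine ⟨fun i => isClosed_Icc, fun i => isConnected_Icc (hab _).le, fun i => ?_, ?_⟩
    · simp only [G, interior_Icc]
      exact nonempty_Ioo.mpr (hab _)
    · rintro i j hij x ⟨hi, hj⟩
      rcases lt_or_gt_of_ne hij with h | h
      · exact absurd hj (hlt i j h x hi)
      · exact absurd hi (hlt j i h x hj)
  exact (iInf_le _ ⟨G, hG⟩).trans (iSup_le fun i => hl (r i))
end

section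
/- Let V : ℝ → ℝ be Borel measurable, locally integrable and nonnegative almost everywhere, and let k ≥ 1. If Δ*_k(ℝ) < Σ_V, then there exists a k-partition P of ℝ realizing the infimal energy, i.e. Δ(P) = Δ*_k(ℝ). (This is the paper's Theorem 1.3 for the metric graph G = ℝ.) -/
open MeasureTheory Set Filter Topology
open scoped ENNReal

lemma smoothTransition_deriv_bound :
    ∃ C : ℝ, 0 < C ∧ ∀ x, deriv Real.smoothTransition x ≤ C := by
  have hcd : ContDiff ℝ 1 Real.smoothTransition := Real.smoothTransition.contDiff
  have hc : Continuous (deriv Real.smoothTransition) := hcd.continuous_deriv le_rfl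
  obtain ⟨C, hC⟩ := (isCompact_Icc (a := (0:ℝ)) (b := 1)).exists_bound_of_continuousOn
    hc.continuousOn
  refine ⟨|C| + 1, by positivity, fun x => ?_⟩
  by_cases hx : x ∈ Icc (0:ℝ) 1
  · have := hC x hx
    have h2 := le_abs_self (deriv Real.smoothTransition x)
    have h3 := le_abs_self C
    rw [Real.norm_eq_abs] at this
    linarith
  · have : deriv Real.smoothTransition x = 0 := by
      rw [mem_Icc, not_and_or, not_le, not_le] at hx
      rcases hx with hx | hx
      · have : Real.smoothTransition =ᶠ[𝓝 x] fun _ => 0 := by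
          filter_upwards [Iio_mem_nhds hx] with y hy
          exact Real.smoothTransition.zero_of_nonpos (le_of_lt hy)
        rw [this.deriv_eq]; simp
      · have : Real.smoothTransition =ᶠ[𝓝 x] fun _ => 1 := by
          filter_upwards [Ioi_mem_nhds hx] with y hy
          exact Real.smoothTransition.one_of_one_le (le_of_lt hy)
        rw [this.deriv_eq]; simp
    rw [this]; positivity

lemma cutoff_zero (ε : ℝ) (hε : 0 < ε) :
    ∃ δ : ℝ, 0 < δ ∧ δ ≤ ε ∧ ∃ χ : ℝ → ℝ, ContDiff ℝ 1 χ ∧ (∀ x, 0 ≤ χ x) ∧ (∀ x, χ x ≤ 1) ∧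
      (∀ x, |x| ≤ δ → χ x = 0) ∧ (∀ x, ε ≤ |x| → χ x = 1) ∧
      Integrable (fun x => (deriv χ x) ^ 2 * (|x| + δ)) ∧
      ∫ x, (deriv χ x) ^ 2 * (|x| + δ) ≤ ε := by
  obtain ⟨C, hC0, hC⟩ := smoothTransition_deriv_bound
  set h := Real.smoothTransition with hh
  have hcd : ContDiff ℝ 1 h := Real.smoothTransition.contDiff
  obtain ⟨L, hL0, hL⟩ : ∃ L : ℝ, 0 < L ∧ 4 * C / L ≤ ε := by
    refine ⟨4 * C / ε, by positivity, le_of_eq ?_⟩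
    field_simp
  have hexp : 1 < Real.exp (2 * L) := by rw [Real.one_lt_exp_iff]; linarith
  set D := 2 * Real.exp (2 * L) - 1 with hD
  have hD1 : 1 < D := by linarith
  set δ := ε / Real.sqrt D with hδ
  have hsq : 1 < Real.sqrt D := by rw [Real.lt_sqrt] <;> linarith
  have hδ0 : 0 < δ := by positivity
  have hδε : δ ≤ ε := div_le_self hε.le hsq.le
  have hrel : ε ^ 2 + δ ^ 2 = 2 * δ ^ 2 * Real.exp (2 * L) := by
    have : δ ^ 2 * D = ε ^ 2 := by
      rw [hδ, div_pow, Real.sq_sqrt (by linarith)]; field_simp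
    rw [hD] at this; linarith
  have hpos : ∀ x : ℝ, 0 < x ^ 2 + δ ^ 2 := fun x => by positivity
  set χ : ℝ → ℝ := fun x => h ((Real.log (x ^ 2 + δ ^ 2) - Real.log (2 * δ ^ 2)) / (2 * L)) with hχ
  have hχcd : ContDiff ℝ 1 χ := by
    apply hcd.comp
    apply ContDiff.div_const
    apply ContDiff.sub _ contDiff_const
    exact ContDiff.log (by fun_prop) (fun x => (hpos x).ne')
  have hder : ∀ x, ∃ d, 0 ≤ d ∧ d ≤ C ∧ deriv χ x = d * (x / ((x ^ 2 + δ ^ 2) * L)) := by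
    intro x
    refine ⟨deriv h ((Real.log (x ^ 2 + δ ^ 2) - Real.log (2 * δ ^ 2)) / (2 * L)),
      Monotone.deriv_nonneg Real.smoothTransition.monotone, hC _, ?_⟩
    have h1 : HasDerivAt (fun x : ℝ => x ^ 2 + δ ^ 2) (2 * x) x := by
      simpa using (hasDerivAt_pow 2 x).add_const (δ ^ 2)
    have h2 := ((h1.log (hpos x).ne').sub_const (Real.log (2 * δ ^ 2))).div_const (2 * L)
    have h3 := ((hcd.differentiable one_ne_zero) ((Real.log (x ^ 2 + δ ^ 2) - Real.log (2 * δ ^ 2)) / (2 * L))).hasDerivAt.comp x h2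
    have h4 : deriv χ x = _ := h3.deriv
    rw [h4]
    have := (hpos x).ne'
    field_simp
  have hone : ∀ x, ε ≤ |x| → χ x = 1 := by
    intro x hx
    apply Real.smoothTransition.one_of_one_le
    rw [le_div_iff₀ (by positivity), ← Real.log_div (hpos x).ne' (by positivity), one_mul,
      Real.le_log_iff_exp_le (div_pos (hpos x) (by positivity)), le_div_iff₀ (by positivity)]
    have : ε ^ 2 ≤ x ^ 2 := by rw [← sq_abs x]; gcongr
    linarith
  have hzero : ∀ x, |x| ≤ δ → χ x = 0 := by
    intro x hx
    apply Real.smoothTransition.zero_of_nonpos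
    apply div_nonpos_of_nonpos_of_nonneg _ (by positivity)
    rw [sub_nonpos]
    apply Real.log_le_log (hpos x)
    have : x ^ 2 ≤ δ ^ 2 := by rw [← sq_abs x]; gcongr
    linarith
  have hcont : Continuous (deriv χ) := hχcd.continuous_deriv le_rfl
  have hsupp : ∀ x, ε < |x| → deriv χ x = 0 := by
    intro x hx
    have : χ =ᶠ[𝓝 x] fun _ => 1 := by
      filter_upwards [(isOpen_lt continuous_const continuous_abs).mem_nhds hx] with y hy
      exact hone y (le_of_lt hy)
    rw [this.deriv_eq]; simp
  have hcontI : Continuous (fun x => (deriv χ x) ^ 2 * (|x| + δ)) := by fun_prop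
  set b := ε + 1 with hb
  have hss : Function.support (fun x => (deriv χ x) ^ 2 * (|x| + δ)) ⊆ Ioc (-b) b := by
    intro x hx
    by_contra hcon
    apply hx
    have : ε < |x| := by
      by_contra h5
      rw [not_lt, abs_le] at h5
      exact hcon ⟨by linarith, by linarith⟩
    simp [hsupp x this]
  have hInt : Integrable (fun x => (deriv χ x) ^ 2 * (|x| + δ)) := by
    apply hcontI.integrable_of_hasCompactSupport
    apply HasCompactSupport.intro (isCompact_Icc (a := -b) (b := b))
    intro x hx
    by_contra h6
    exact hx (Ioc_subset_Icc_self (hss h6))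
  refine ⟨δ, hδ0, hδε, χ, hχcd, fun x => Real.smoothTransition.nonneg _,
    fun x => Real.smoothTransition.le_one _, hzero, hone, hInt, ?_⟩
  have hpt : ∀ x, (deriv χ x) ^ 2 * (|x| + δ) ≤ 2 * C / L * |deriv χ x| := by
    intro x
    obtain ⟨d, hd0, hdC, hd⟩ := hder x
    have e1 : |deriv χ x| * (|x| + δ) ≤ 2 * C / L := by
      rw [hd, abs_mul, abs_of_nonneg hd0, abs_div, abs_of_pos (by have := hpos x; positivity : 0 < (x ^ 2 + δ ^ 2) * L)]
      have e2 : |x| * (|x| + δ) ≤ 2 * (x ^ 2 + δ ^ 2) := by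
        rw [← sq_abs x]; nlinarith [sq_nonneg (|x| - δ)]
      have := hpos x
      have e3 : |x| / ((x ^ 2 + δ ^ 2) * L) * (|x| + δ) ≤ 2 / L := by
        rw [div_mul_eq_mul_div, div_le_div_iff₀ (by positivity) hL0]
        nlinarith
      calc d * (|x| / ((x ^ 2 + δ ^ 2) * L)) * (|x| + δ) = d * (|x| / ((x ^ 2 + δ ^ 2) * L) * (|x| + δ)) := by ring
        _ ≤ C * (2 / L) := by gcongr
        _ = _ := by ring
    have : (deriv χ x) ^ 2 * (|x| + δ) = |deriv χ x| * (|x| + δ) * |deriv χ x| := by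
      rw [← sq_abs]; ring
    rw [this]
    gcongr
  have hb0 : 0 < b := by positivity
  rw [← intervalIntegral.integral_eq_integral_of_support_subset hss]
  have hdiff : ∀ x, DifferentiableAt ℝ χ x := fun x => (hχcd.differentiable one_ne_zero) x
  have hIabs : ∫ x in (-b)..b, |deriv χ x| = 2 := by
    rw [← intervalIntegral.integral_add_adjacent_intervals (b := 0)
      (hcont.abs.intervalIntegrable _ _) (hcont.abs.intervalIntegrable _ _)]
    have i1 : ∫ x in (-b)..0, |deriv χ x| = ∫ x in (-b)..0, -deriv χ x := by
      apply intervalIntegral.integral_congr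
      intro x hx
      rw [uIcc_of_le (by linarith)] at hx
      obtain ⟨d, hd0, hdC, hd⟩ := hder x
      apply abs_of_nonpos
      rw [hd]
      apply mul_nonpos_of_nonneg_of_nonpos hd0
      exact div_nonpos_of_nonpos_of_nonneg hx.2 (by have := hpos x; positivity)
    have i2 : ∫ x in (0:ℝ)..b, |deriv χ x| = ∫ x in (0:ℝ)..b, deriv χ x := by
      apply intervalIntegral.integral_congr
      intro x hx
      rw [uIcc_of_le (by linarith)] at hx
      obtain ⟨d, hd0, hdC, hd⟩ := hder x
      apply abs_of_nonneg
      rw [hd]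
      apply mul_nonneg hd0
      exact div_nonneg hx.1 (by have := hpos x; positivity)
    rw [i1, i2, intervalIntegral.integral_neg,
      intervalIntegral.integral_deriv_eq_sub (fun x _ => hdiff x) (hcont.intervalIntegrable _ _),
      intervalIntegral.integral_deriv_eq_sub (fun x _ => hdiff x) (hcont.intervalIntegrable _ _),
      hone b (by rw [abs_of_pos hb0]; linarith), hone (-b) (by rw [abs_neg, abs_of_pos hb0]; linarith),
      hzero 0 (by simpa using hδ0.le)]
    norm_num
  calc ∫ x in (-b)..b, (deriv χ x) ^ 2 * (|x| + δ)
      ≤ ∫ x in (-b)..b, 2 * C / L * |deriv χ x| :=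
        intervalIntegral.integral_mono_on (by linarith) (hcontI.intervalIntegrable _ _)
          ((hcont.abs.const_mul _).intervalIntegrable _ _) (fun x _ => hpt x)
    _ = 4 * C / L := by rw [intervalIntegral.integral_const_mul, hIabs]; ring
    _ ≤ ε := hL

lemma cutoff (a ε : ℝ) (hε : 0 < ε) :
    ∃ δ : ℝ, 0 < δ ∧ δ ≤ ε ∧ ∃ χ : ℝ → ℝ, ContDiff ℝ 1 χ ∧ (∀ x, 0 ≤ χ x) ∧ (∀ x, χ x ≤ 1) ∧
      (∀ x, |x - a| ≤ δ → χ x = 0) ∧ (∀ x, ε ≤ |x - a| → χ x = 1) ∧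
      Integrable (fun x => (deriv χ x) ^ 2 * (|x - a| + δ)) ∧
      ∫ x, (deriv χ x) ^ 2 * (|x - a| + δ) ≤ ε := by
  obtain ⟨δ, h0, h1, χ, hcd, hn, hl, hz, ho, hi, hI⟩ := cutoff_zero ε hε
  refine ⟨δ, h0, h1, fun x => χ (x - a), hcd.comp (contDiff_id.sub contDiff_const), fun x => hn _,
    fun x => hl _, fun x hx => hz _ hx, fun x hx => ho _ hx, ?_, ?_⟩
  · simp_rw [deriv_comp_sub_const]
    exact hi.comp_sub_right a
  · simp_rw [deriv_comp_sub_const]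
    rw [integral_sub_right_eq_self (fun x => deriv χ x ^ 2 * (|x| + δ)) a]
    exact hI

lemma hcs_sq {f : ℝ → ℝ} (hf : HasCompactSupport f) :
    HasCompactSupport (fun x => (f x) ^ 2) := by
  apply HasCompactSupport.intro hf.isCompact
  intro x hx
  rw [image_eq_zero_of_notMem_tsupport hx]
  norm_num

lemma sq_le_of_zero (f : ℝ → ℝ) (hf : ContDiff ℝ 1 f) (hfc : HasCompactSupport f) (p x : ℝ)
    (hp : f p = 0) : (f x) ^ 2 ≤ |x - p| * ∫ t, (deriv f t) ^ 2 := by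
  have hcont : Continuous (deriv f) := hf.continuous_deriv le_rfl
  have hI : Integrable (fun t => (deriv f t) ^ 2) := by
    apply (hcont.pow 2).integrable_of_hasCompactSupport
    exact hcs_sq hfc.deriv
  have key : ∀ p x : ℝ, p < x → (f x - f p) ^ 2 ≤ (x - p) * ∫ t, (deriv f t) ^ 2 := by
    intro p x hpx
    have h1 : ∫ t in p..x, deriv f t = f x - f p :=
      intervalIntegral.integral_deriv_eq_sub
        (fun y _ => (hf.differentiable one_ne_zero) y) (hcont.intervalIntegrable _ _)
    have h2 : ∫ t in p..x, (deriv f t) ^ 2 ≤ ∫ t, (deriv f t) ^ 2 := by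
      rw [intervalIntegral.integral_of_le hpx.le]
      exact setIntegral_le_integral hI (Eventually.of_forall fun t => sq_nonneg _)
    set c := (f x - f p) / (x - p) with hc
    have h3 : 0 ≤ ∫ t in p..x, (deriv f t - c) ^ 2 :=
      intervalIntegral.integral_nonneg hpx.le (fun t _ => sq_nonneg _)
    have h4 : ∫ t in p..x, (deriv f t - c) ^ 2 =
        (∫ t in p..x, (deriv f t) ^ 2) - 2 * c * (f x - f p) + c ^ 2 * (x - p) := by
      have : (fun t => (deriv f t - c) ^ 2) =
          fun t => ((deriv f t) ^ 2 - 2 * c * deriv f t) + c ^ 2 := by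
        funext t; ring
      have j1 : IntervalIntegrable (fun t => (deriv f t) ^ 2) volume p x :=
        (hcont.pow 2).intervalIntegrable _ _
      have j2 : IntervalIntegrable (fun t => 2 * c * deriv f t) volume p x :=
        (hcont.const_mul _).intervalIntegrable _ _
      rw [this, intervalIntegral.integral_add (j1.sub j2) (by simp),
        intervalIntegral.integral_sub j1 j2, intervalIntegral.integral_const_mul, h1]
      simp; ring
    have hxp : 0 < x - p := by linarith
    have h5 : c * (x - p) = f x - f p := by rw [hc]; field_simp
    rw [h4] at h3
    have h6 : c * (f x - f p) ≤ ∫ t, (deriv f t) ^ 2 := by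
      have : c ^ 2 * (x - p) = c * (f x - f p) := by rw [← h5]; ring
      linarith
    calc (f x - f p) ^ 2 = (x - p) * (c * (f x - f p)) := by rw [← h5]; ring
      _ ≤ _ := by gcongr
  rcases lt_trichotomy p x with h | h | h
  · have := key p x h
    rw [hp, sub_zero] at this
    rwa [abs_of_pos (by linarith)]
  · subst h; simp [hp]
  · have := key x p h
    rw [hp] at this
    rw [abs_of_neg (by linarith)]
    linarith

lemma integrable_potential (V : ℝ → ℝ) (hloc : LocallyIntegrable V) (f : ℝ → ℝ)
    (hf : Continuous f) (hfc : HasCompactSupport f) : Integrable (fun x => V x * (f x) ^ 2) := by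
  have h := hloc.integrable_smul_right_of_hasCompactSupport (hf.pow 2)
    (hcs_sq hfc)
  simpa [smul_eq_mul] using h

lemma norm_sq_pos {f : ℝ → ℝ} (hf : Continuous f) (hfc : HasCompactSupport f) (h0 : f ≠ 0) :
    0 < ∫ x, (f x) ^ 2 := by
  obtain ⟨x, hx⟩ := Function.ne_iff.1 h0
  exact Continuous.integral_pos_of_hasCompactSupport_nonneg_nonzero (x := x) (hf.pow 2)
    (hcs_sq hfc) (fun t => sq_nonneg _)
    (pow_ne_zero 2 hx)

lemma rayleigh_nonneg (V : ℝ → ℝ) (hpos : ∀ᵐ x ∂(volume : Measure ℝ), 0 ≤ V x) (f : ℝ → ℝ) :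
    0 ≤ rayleigh V f := by
  unfold rayleigh
  apply div_nonneg
  · apply integral_nonneg_of_ae
    filter_upwards [hpos] with x hx
    simp only [Pi.zero_apply]; positivity
  · exact integral_nonneg fun x => sq_nonneg _

lemma choose_eta (M ε : ℝ) (hε : 0 < ε) (hM : 0 ≤ M) :
    ∃ η : ℝ, 0 < η ∧ (2 * η + η ^ 2) * M + 4 * η ^ 4 * M * (M + ε) ≤ ε ∧ 4 * η ^ 4 * M < 1 := by
  have t1 : Tendsto (fun η : ℝ => (2 * η + η ^ 2) * M + 4 * η ^ 4 * M * (M + ε)) (𝓝[>] 0) (𝓝 0) := by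
    apply tendsto_nhdsWithin_of_tendsto_nhds
    have : Continuous (fun η : ℝ => (2 * η + η ^ 2) * M + 4 * η ^ 4 * M * (M + ε)) := by fun_prop
    simpa using this.tendsto 0
  have t2 : Tendsto (fun η : ℝ => 4 * η ^ 4 * M) (𝓝[>] 0) (𝓝 0) := by
    apply tendsto_nhdsWithin_of_tendsto_nhds
    have : Continuous (fun η : ℝ => 4 * η ^ 4 * M) := by fun_prop
    simpa using this.tendsto 0
  obtain ⟨η, h1, h2, h3⟩ := ((t1.eventually_lt_const hε).and
    ((t2.eventually_lt_const one_pos).and self_mem_nhdsWithin)).exists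
  exact ⟨η, h3, h1.le, h2⟩

lemma cut_test (V : ℝ → ℝ) (hloc : LocallyIntegrable V)
    (hpos : ∀ᵐ x ∂(volume : Measure ℝ), 0 ≤ V x) (a M ε : ℝ) (hε : 0 < ε) :
    ∃ δ : ℝ, 0 < δ ∧ ∀ f : ℝ → ℝ, ContDiff ℝ 1 f → f ≠ 0 → HasCompactSupport f →
      rayleigh V f ≤ M → (∃ p, |p - a| ≤ δ ∧ f p = 0) →
      ∃ g : ℝ → ℝ, ContDiff ℝ 1 g ∧ g ≠ 0 ∧ HasCompactSupport g ∧ tsupport g ⊆ tsupport f ∧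
        tsupport g ⊆ {x | δ ≤ |x - a|} ∧ rayleigh V g ≤ rayleigh V f + ε := by
  rcases lt_or_ge M 0 with hM | hM
  · refine ⟨1, one_pos, fun f _ _ _ hr => ?_⟩
    have := rayleigh_nonneg V hpos f
    linarith
  obtain ⟨η, hη0, hη1, hη2⟩ := choose_eta M ε hε hM
  obtain ⟨δ, hδ0, hδε, χ, hχ, hχ0, hχ1, hz, ho, hχi, hχI⟩ := cutoff a (η ^ 2) (by positivity)
  refine ⟨δ, hδ0, fun f hf hf0 hfc hr ⟨p, hpa, hp⟩ => ?_⟩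
  have hNpos := norm_sq_pos hf.continuous hfc hf0
  set N := ∫ x, (f x) ^ 2 with hN
  have hfder : Continuous (deriv f) := hf.continuous_deriv le_rfl
  have hχder : Continuous (deriv χ) := hχ.continuous_deriv le_rfl
  have iD : Integrable (fun t => (deriv f t) ^ 2) :=
    (hfder.pow 2).integrable_of_hasCompactSupport
      (hcs_sq hfc.deriv)
  have iF : Integrable (fun t => (f t) ^ 2) :=
    (hf.continuous.pow 2).integrable_of_hasCompactSupport
      (hcs_sq hfc)
  have iV := integrable_potential V hloc f hf.continuous hfc
  set E := ∫ x, ((deriv f x) ^ 2 + V x * (f x) ^ 2) with hE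
  have hrE : rayleigh V f = E / N := rfl
  have hEM : E ≤ M * N := by
    rw [hrE, div_le_iff₀ hNpos] at hr; exact hr
  have hDE : ∫ t, (deriv f t) ^ 2 ≤ E := by
    apply integral_mono_ae iD (iD.add iV)
    filter_upwards [hpos] with x hx
    simp only [Pi.add_apply]
    have : 0 ≤ V x * (f x) ^ 2 := by positivity
    linarith
  have hpt : ∀ x, (f x) ^ 2 ≤ (|x - a| + δ) * (M * N) := by
    intro x
    refine (sq_le_of_zero f hf hfc p x hp).trans ?_
    have h1 : |x - p| ≤ |x - a| + δ := by
      have := abs_sub_le x a p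
      rw [abs_sub_comm a p] at this
      linarith
    have h2 : ∫ t, (deriv f t) ^ 2 ≤ M * N := hDE.trans hEM
    have h3 : 0 ≤ ∫ t, (deriv f t) ^ 2 := integral_nonneg fun x => sq_nonneg _
    gcongr
  set g : ℝ → ℝ := fun x => χ x * f x with hg
  have hgcd : ContDiff ℝ 1 g := hχ.mul hf
  have hgc : HasCompactSupport g := hfc.mul_left
  have hgder : ∀ x, deriv g x = deriv χ x * f x + χ x * deriv f x := fun x =>
    deriv_mul ((hχ.differentiable one_ne_zero) x) ((hf.differentiable one_ne_zero) x)
  have hsq : ∀ x, (χ x) ^ 2 ≤ 1 := fun x => pow_le_one₀ (hχ0 x) (hχ1 x)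
  have iG : Integrable (fun t => (g t) ^ 2) :=
    (hgcd.continuous.pow 2).integrable_of_hasCompactSupport
      (hcs_sq hgc)
  have hMN : 0 ≤ M * N := by positivity
  -- the norm of g
  have hNg : N * (1 - 4 * η ^ 4 * M) ≤ ∫ x, (g x) ^ 2 := by
    have hb : ∀ x, (f x) ^ 2 - (Icc (a - η ^ 2) (a + η ^ 2)).indicator
        (fun _ => 2 * η ^ 2 * (M * N)) x ≤ (g x) ^ 2 := by
      intro x
      by_cases hx : x ∈ Icc (a - η ^ 2) (a + η ^ 2)
      · rw [indicator_of_mem hx]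
        have h1 : |x - a| ≤ η ^ 2 := by rw [abs_le]; constructor <;> linarith [hx.1, hx.2]
        have h2 : (f x) ^ 2 ≤ 2 * η ^ 2 * (M * N) := by
          refine (hpt x).trans ?_
          gcongr
          linarith
        have := sq_nonneg (g x)
        linarith
      · rw [indicator_of_notMem hx]
        have h1 : η ^ 2 ≤ |x - a| := by
          by_contra hcon
          rw [not_le, abs_lt] at hcon
          exact hx ⟨by linarith, by linarith⟩
        simp [hg, ho x h1]
    have iI : Integrable ((Icc (a - η ^ 2) (a + η ^ 2)).indicator
        (fun _ : ℝ => 2 * η ^ 2 * (M * N))) := by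
      rw [integrable_indicator_iff measurableSet_Icc]
      exact integrableOn_const (by simp)
    have := integral_mono (iF.sub iI) iG hb
    simp only [Pi.sub_apply] at this
    rw [integral_sub iF iI, integral_indicator measurableSet_Icc, setIntegral_const,
      Real.volume_real_Icc_of_le (by nlinarith [sq_nonneg η])] at this
    simp only [smul_eq_mul] at this
    calc _ = N - (a + η ^ 2 - (a - η ^ 2)) * (2 * η ^ 2 * (M * N)) := by ring
      _ ≤ _ := this
  have hNgpos : 0 < ∫ x, (g x) ^ 2 := lt_of_lt_of_le (mul_pos hNpos (by linarith)) hNg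
  have hg0 : g ≠ 0 := by
    intro h
    rw [h] at hNgpos
    simp at hNgpos
  -- the energy of g
  have hEg : ∫ x, ((deriv g x) ^ 2 + V x * (g x) ^ 2) ≤
      (1 + η) * E + (1 + 1 / η) * (η ^ 2 * (M * N)) := by
    have iDg : Integrable (fun t => (deriv g t) ^ 2) :=
      ((hgcd.continuous_deriv le_rfl).pow 2).integrable_of_hasCompactSupport
        (hcs_sq hgc.deriv)
    have iVg := integrable_potential V hloc g hgcd.continuous hgc
    have i1 : Integrable (fun x => (1 + η) * ((deriv f x) ^ 2 + V x * (f x) ^ 2)) :=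
      (iD.add iV).const_mul _
    have i2 : Integrable (fun x => (1 + 1 / η) * (((deriv χ x) ^ 2 * (|x - a| + δ)) * (M * N))) :=
      (hχi.mul_const _).const_mul _
    calc ∫ x, ((deriv g x) ^ 2 + V x * (g x) ^ 2) ≤
        ∫ x, ((1 + η) * ((deriv f x) ^ 2 + V x * (f x) ^ 2) +
          (1 + 1 / η) * (((deriv χ x) ^ 2 * (|x - a| + δ)) * (M * N))) := by
          apply integral_mono_ae (iDg.add iVg) (i1.add i2)
          filter_upwards [hpos] with x hx
          simp only [Pi.add_apply]
          have h1 : (deriv g x) ^ 2 ≤ (1 + η) * (deriv f x) ^ 2 +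
              (1 + 1 / η) * ((deriv χ x) ^ 2 * (|x - a| + δ) * (M * N)) := by
            have h2 : (deriv χ x * f x) ^ 2 ≤ (deriv χ x) ^ 2 * (|x - a| + δ) * (M * N) := by
              rw [mul_pow, mul_assoc]
              gcongr
              exact hpt x
            have h3 : (χ x * deriv f x) ^ 2 ≤ (deriv f x) ^ 2 := by
              rw [mul_pow]
              exact mul_le_of_le_one_left (sq_nonneg _) (hsq x)
            have h4 : ∀ u v : ℝ, (u + v) ^ 2 ≤ (1 + 1 / η) * u ^ 2 + (1 + η) * v ^ 2 := by
              intro u v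
              have : (1 + 1 / η) * u ^ 2 + (1 + η) * v ^ 2 - (u + v) ^ 2 =
                (u - η * v) ^ 2 / η := by field_simp; ring
              have h5 : 0 ≤ (u - η * v) ^ 2 / η := by positivity
              linarith
            rw [hgder]
            refine (h4 _ _).trans ?_
            rw [add_comm]
            gcongr
          have h6 : V x * (g x) ^ 2 ≤ (1 + η) * (V x * (f x) ^ 2) := by
            have h7 : (g x) ^ 2 ≤ (f x) ^ 2 := by
              simp only [hg, mul_pow]
              exact mul_le_of_le_one_left (sq_nonneg _) (hsq x)
            have h8 : V x * (g x) ^ 2 ≤ V x * (f x) ^ 2 := by gcongr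
            have h9 : 0 ≤ η * (V x * (f x) ^ 2) := by positivity
            linarith
          linarith
      _ = (1 + η) * E + (1 + 1 / η) * ((∫ x, (deriv χ x) ^ 2 * (|x - a| + δ)) * (M * N)) := by
          rw [integral_add i1 i2, integral_const_mul, integral_const_mul, integral_mul_const]
      _ ≤ _ := by gcongr
  refine ⟨g, hgcd, hg0, hgc, tsupport_mul_subset_right, ?_, ?_⟩
  · apply closure_minimal _ (isClosed_le continuous_const (by fun_prop))
    intro x hx
    by_contra hcon
    apply hx
    simp only [mem_ofPred_eq, not_le] at hcon
    simp [hg, hz x hcon.le]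
  · have hr0 := rayleigh_nonneg V hpos f
    set r := rayleigh V f with hrdef
    have hErN : E = r * N := by rw [hrE]; field_simp
    change (∫ x, ((deriv g x) ^ 2 + V x * (g x) ^ 2)) / (∫ x, (g x) ^ 2) ≤ r + ε
    rw [div_le_iff₀ hNgpos]
    refine hEg.trans (le_trans ?_ (mul_le_mul_of_nonneg_left hNg (by linarith)))
    have e1 : (1 + 1 / η) * (η ^ 2 * (M * N)) = (η ^ 2 + η) * M * N := by field_simp
    rw [e1, hErN]
    have e2 : (1 + η) * r + (η ^ 2 + η) * M ≤ (r + ε) * (1 - 4 * η ^ 4 * M) := by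
      have e3 : η * r ≤ η * M := by gcongr
      have e4 : 4 * η ^ 4 * M * (r + ε) ≤ 4 * η ^ 4 * M * (M + ε) := by gcongr
      linarith
    have := mul_le_mul_of_nonneg_right e2 hNpos.le
    linarith

lemma lambdaV_mono (V : ℝ → ℝ) {S T : Set ℝ} (h : S ⊆ T) : lambdaV V T ≤ lambdaV V S := by
  apply sInf_le_sInf
  rintro e ⟨f, ⟨h1, h2, h3, h4⟩, rfl⟩
  exact ⟨f, ⟨h1, h2, h3, h4.trans h⟩, rfl⟩

lemma lambdaV_limit (V : ℝ → ℝ) (hloc : LocallyIntegrable V)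
    (hpos : ∀ᵐ x ∂(volume : Measure ℝ), 0 ≤ V x) (a : ℝ) (S : Set ℝ) (T : ℝ → Set ℝ)
    (hT : ∀ δ, 0 < δ → ∃ p, p ∉ T δ ∧ |p - a| ≤ 2 * δ)
    (hS : ∀ δ, 0 < δ → ∀ x ∈ T δ, 2 * δ ≤ |x - a| → x ∈ S)
    (e : ℝ≥0∞) (he : e ≠ ⊤) (hle : ∀ δ, 0 < δ → lambdaV V (T δ) ≤ e) : lambdaV V S ≤ e := by
  apply ENNReal.le_of_forall_pos_le_add
  intro ε hε _
  have hε2 : (0:ℝ) < ε / 2 := by have : (0:ℝ) < ε := hε; positivity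
  obtain ⟨δ, hδ, H⟩ := cut_test V hloc hpos a (e.toReal + ε / 2) (ε / 2) hε2
  have h1 : lambdaV V (T (δ / 2)) < e + ENNReal.ofReal (ε / 2) :=
    lt_of_le_of_lt (hle _ (by positivity))
      (ENNReal.lt_add_right he (by simpa using hε2))
  obtain ⟨_, ⟨f, ⟨hf1, hf0, hfc, hfs⟩, rfl⟩, hlt⟩ := sInf_lt_iff.1 h1
  have hr : rayleigh V f ≤ e.toReal + ε / 2 := by
    rw [← ENNReal.ofReal_toReal he, ← ENNReal.ofReal_add ENNReal.toReal_nonneg hε2.le] at hlt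
    exact (ENNReal.ofReal_lt_ofReal_iff_of_nonneg (rayleigh_nonneg V hpos f)).1 hlt |>.le
  obtain ⟨p, hp, hpa⟩ := hT (δ / 2) (by positivity)
  obtain ⟨g, hg1, hg0, hgc, hgf, hgs, hgr⟩ := H f hf1 hf0 hfc hr
    ⟨p, by linarith, image_eq_zero_of_notMem_tsupport (fun h => hp (hfs h))⟩
  have hg : TestFor S g := by
    refine ⟨hg1, hg0, hgc, fun x hx => hS (δ / 2) (by positivity) x (hfs (hgf hx)) ?_⟩
    have : δ ≤ |x - a| := hgs hx
    linarith
  calc lambdaV V S ≤ ENNReal.ofReal (rayleigh V g) := sInf_le ⟨g, hg, rfl⟩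
    _ ≤ ENNReal.ofReal (e.toReal + ε) := ENNReal.ofReal_le_ofReal (by linarith)
    _ = e + ε := by
      rw [ENNReal.ofReal_add ENNReal.toReal_nonneg (NNReal.coe_nonneg ε), ENNReal.ofReal_toReal he,
        ENNReal.ofReal_coe_nnreal]

/-- The closed interval with extended real endpoints. -/
def Jset (a b : EReal) : Set ℝ := {x : ℝ | a ≤ (x : EReal) ∧ (x : EReal) ≤ b}

lemma Jset_mono {a b a' b' : EReal} (ha : a' ≤ a) (hb : b ≤ b') : Jset a b ⊆ Jset a' b' :=
  fun _ hx => ⟨ha.trans hx.1, hx.2.trans hb⟩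

lemma left_step (V : ℝ → ℝ) (hloc : LocallyIntegrable V)
    (hpos : ∀ᵐ x ∂(volume : Measure ℝ), 0 ≤ V x) (e : ℝ≥0∞) (he : e < SigmaV V) (a b : EReal)
    (h : e < lambdaV V (Jset a b)) :
    ∃ U ∈ 𝓝 a, ∃ a', (∀ u ∈ U, a' ≤ u) ∧ e < lambdaV V (Jset a' b) := by
  induction a with
  | bot => exact ⟨univ, univ_mem, ⊥, fun _ _ => bot_le, h⟩
  | top =>
    obtain ⟨R, hR⟩ := lt_iSup_iff.1 he
    obtain ⟨hR0, hR⟩ := lt_iSup_iff.1 hR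
    refine ⟨Ici (R : EReal), Ici_mem_nhds (EReal.coe_lt_top R), R, fun u hu => hu,
      lt_of_lt_of_le hR (lambdaV_mono V fun x hx => ?_)⟩
    have : R ≤ x := EReal.coe_le_coe_iff.1 hx.1
    exact this.trans (le_abs_self x)
  | coe a =>
    by_contra hcon
    push Not at hcon
    apply absurd h
    rw [not_lt]
    apply lambdaV_limit V hloc hpos a _ (fun δ => Jset ((a - δ : ℝ) : EReal) b) _ _ e
      (ne_top_of_lt he)
    · intro δ hδ
      refine hcon (Ici ((a - δ : ℝ) : EReal)) (Ici_mem_nhds ?_) _ (fun u hu => hu)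
      exact EReal.coe_lt_coe_iff.2 (by linarith)
    · intro δ hδ
      refine ⟨a - 2 * δ, fun hx => ?_, ?_⟩
      · have := EReal.coe_le_coe_iff.1 hx.1
        linarith
      · rw [abs_le]; constructor <;> linarith
    · intro δ hδ x hx hxa
      have h1 := EReal.coe_le_coe_iff.1 hx.1
      refine ⟨EReal.coe_le_coe_iff.2 ?_, hx.2⟩
      by_contra h2
      rw [not_le] at h2
      rw [abs_of_neg (by linarith)] at hxa
      linarith

lemma right_step (V : ℝ → ℝ) (hloc : LocallyIntegrable V)
    (hpos : ∀ᵐ x ∂(volume : Measure ℝ), 0 ≤ V x) (e : ℝ≥0∞) (he : e < SigmaV V) (a b : EReal)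
    (h : e < lambdaV V (Jset a b)) :
    ∃ U ∈ 𝓝 b, ∃ b', (∀ u ∈ U, u ≤ b') ∧ e < lambdaV V (Jset a b') := by
  induction b with
  | top => exact ⟨univ, univ_mem, ⊤, fun _ _ => le_top, h⟩
  | bot =>
    obtain ⟨R, hR⟩ := lt_iSup_iff.1 he
    obtain ⟨hR0, hR⟩ := lt_iSup_iff.1 hR
    refine ⟨Iic ((-R : ℝ) : EReal), Iic_mem_nhds (EReal.bot_lt_coe _), (-R : ℝ), fun u hu => hu,
      lt_of_lt_of_le hR (lambdaV_mono V fun x hx => ?_)⟩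
    have : x ≤ -R := EReal.coe_le_coe_iff.1 hx.2
    exact le_trans (by linarith) (neg_le_abs x)
  | coe b =>
    by_contra hcon
    push Not at hcon
    apply absurd h
    rw [not_lt]
    apply lambdaV_limit V hloc hpos b _ (fun δ => Jset a ((b + δ : ℝ) : EReal)) _ _ e
      (ne_top_of_lt he)
    · intro δ hδ
      refine hcon (Iic ((b + δ : ℝ) : EReal)) (Iic_mem_nhds ?_) _ (fun u hu => hu)
      exact EReal.coe_lt_coe_iff.2 (by linarith)
    · intro δ hδ
      refine ⟨b + 2 * δ, fun hx => ?_, ?_⟩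
      · have := EReal.coe_le_coe_iff.1 hx.2
        linarith
      · rw [abs_le]; constructor <;> linarith
    · intro δ hδ x hx hxa
      have h1 := EReal.coe_le_coe_iff.1 hx.2
      refine ⟨hx.1, EReal.coe_le_coe_iff.2 ?_⟩
      by_contra h2
      rw [not_le] at h2
      rw [abs_of_pos (by linarith)] at hxa
      linarith

lemma isClosed_sublevel (V : ℝ → ℝ) (hloc : LocallyIntegrable V)
    (hpos : ∀ᵐ x ∂(volume : Measure ℝ), 0 ≤ V x) (e : ℝ≥0∞) (he : e < SigmaV V) :
    IsClosed {p : EReal × EReal | lambdaV V (Jset p.1 p.2) ≤ e} := by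
  rw [← isOpen_compl_iff, isOpen_iff_mem_nhds]
  rintro ⟨a, b⟩ hab
  have hab' : e < lambdaV V (Jset a b) := not_le.1 hab
  obtain ⟨U, hU, a', ha', h1⟩ := left_step V hloc hpos e he a b hab'
  obtain ⟨W, hW, b', hb', h2⟩ := right_step V hloc hpos e he a' b h1
  filter_upwards [prod_mem_nhds hU hW]
  rintro ⟨u, w⟩ ⟨hu, hw⟩
  exact not_le.2 (lt_of_lt_of_le h2 (lambdaV_mono V (Jset_mono (ha' u hu) (hb' w hw))))

lemma partition_sep {A B : Set ℝ} (hA : IsConnected A) (hB : IsConnected B)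
    (hAi : (interior A).Nonempty) (hBi : (interior B).Nonempty)
    (h : A ∩ B ⊆ frontier A ∩ frontier B) :
    (∀ x ∈ A, ∀ y ∈ B, x ≤ y) ∨ (∀ y ∈ B, ∀ x ∈ A, y ≤ x) := by
  have key : ∀ A B : Set ℝ, OrdConnected A → OrdConnected B →
      A ∩ B ⊆ frontier A ∩ frontier B → ∀ p ∈ interior A, ∀ q ∈ interior B, p < q →
      ∀ x ∈ A, ∀ y ∈ B, x ≤ y := by
    intro A B hA hB h p hp q hq hpq x hx y hy
    by_contra hcon
    rw [not_le] at hcon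
    have hpA := interior_subset hp
    have hqB := interior_subset hq
    have hpx : p < x := by
      by_contra h1
      rw [not_lt] at h1
      have : p ∈ B := hB.out hy hqB ⟨by linarith, hpq.le⟩
      exact (h ⟨hpA, this⟩).1.2 hp
    have hyq : y < q := by
      by_contra h1
      rw [not_lt] at h1
      have : q ∈ A := hA.out hpA hx ⟨hpq.le, by linarith⟩
      exact (h ⟨this, hqB⟩).2.2 hq
    obtain ⟨m, hm1, hm2⟩ := exists_between (max_lt (lt_min hpq hpx) (lt_min hyq hcon))
    rw [max_lt_iff] at hm1
    rw [lt_min_iff] at hm2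
    have hmA : m ∈ interior A := mem_interior.2
      ⟨Ioo p x, fun z hz => hA.out hpA hx ⟨hz.1.le, hz.2.le⟩, isOpen_Ioo, hm1.1, hm2.2⟩
    have hmB : m ∈ B := hB.out hy hqB ⟨hm1.2.le, hm2.1.le⟩
    exact (h ⟨interior_subset hmA, hmB⟩).1.2 hmA
  have hA' := isPreconnected_iff_ordConnected.1 hA.isPreconnected
  have hB' := isPreconnected_iff_ordConnected.1 hB.isPreconnected
  obtain ⟨p, hp⟩ := hAi
  obtain ⟨q, hq⟩ := hBi
  rcases lt_trichotomy p q with hlt | heq | hgt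
  · exact Or.inl (key A B hA' hB' h p hp q hq hlt)
  · subst heq
    exact absurd hp (h ⟨interior_subset hp, interior_subset hq⟩).1.2
  · refine Or.inr (key B A hB' hA' ?_ q hq p hp hgt)
    rw [inter_comm B A, inter_comm (frontier B)]
    exact h

lemma Jset_isClosed (a b : EReal) : IsClosed (Jset a b) :=
  (isClosed_le continuous_const continuous_coe_real_ereal).inter
    (isClosed_le continuous_coe_real_ereal continuous_const)

lemma Jset_interior (V : ℝ → ℝ) (a b : EReal) (h : lambdaV V (Jset a b) < ⊤) :
    (interior (Jset a b)).Nonempty := by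
  obtain ⟨_, ⟨f, ⟨hf1, hf0, hfc, hfs⟩, rfl⟩, -⟩ := sInf_lt_iff.1 h
  obtain ⟨x, hx⟩ := Function.ne_iff.1 hf0
  have ho : IsOpen (Function.support f) := hf1.continuous.isOpen_support
  exact ⟨x, interior_maximal ((subset_tsupport f).trans hfs) ho hx⟩

lemma Jset_ordConnected (a b : EReal) : OrdConnected (Jset a b) := by
  refine ⟨fun x hx y hy z hz => ⟨hx.1.trans ?_, le_trans ?_ hy.2⟩⟩
  · exact EReal.coe_le_coe_iff.2 hz.1
  · exact EReal.coe_le_coe_iff.2 hz.2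

lemma Jset_frontier_left {a b : EReal} {x : ℝ} (hx : x ∈ Jset a b) (ha : (x : EReal) ≤ a) :
    x ∈ frontier (Jset a b) := by
  rw [(Jset_isClosed a b).frontier_eq]
  refine ⟨hx, fun hi => ?_⟩
  obtain ⟨y, hy, hyx⟩ := (inter_mem
    (nhdsWithin_le_nhds (s := Iio x) (mem_interior_iff_mem_nhds.1 hi))
    self_mem_nhdsWithin |> Filter.nonempty_of_mem)
  have := EReal.coe_le_coe_iff.1 (ha.trans hy.1)
  exact absurd hyx (not_lt.2 this)

lemma Jset_frontier_right {a b : EReal} {x : ℝ} (hx : x ∈ Jset a b) (hb : b ≤ (x : EReal)) :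
    x ∈ frontier (Jset a b) := by
  rw [(Jset_isClosed a b).frontier_eq]
  refine ⟨hx, fun hi => ?_⟩
  obtain ⟨y, hy, hyx⟩ := (inter_mem
    (nhdsWithin_le_nhds (s := Ioi x) (mem_interior_iff_mem_nhds.1 hi))
    self_mem_nhdsWithin |> Filter.nonempty_of_mem)
  have := EReal.coe_le_coe_iff.1 (hy.2.trans hb)
  exact absurd hyx (not_lt.2 this)

lemma Jset_sep {a b a' b' : EReal} (h : b ≤ a') :
    Jset a b ∩ Jset a' b' ⊆ frontier (Jset a b) ∩ frontier (Jset a' b') := by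
  rintro x ⟨h1, h2⟩
  exact ⟨Jset_frontier_right h1 (h.trans h2.1), Jset_frontier_left h2 (h1.2.trans h)⟩

/-- Interval configurations of energy at most `e`. -/
def Conf (V : ℝ → ℝ) (k : ℕ) (e : ℝ≥0∞) : Set (Fin k → EReal × EReal) :=
  {c | (∀ i, lambdaV V (Jset (c i).1 (c i).2) ≤ e) ∧
    ∀ i j, i ≠ j → (c i).2 ≤ (c j).1 ∨ (c j).2 ≤ (c i).1}

lemma Conf_isClosed (V : ℝ → ℝ) (hloc : LocallyIntegrable V)
    (hpos : ∀ᵐ x ∂(volume : Measure ℝ), 0 ≤ V x) (k : ℕ) (e : ℝ≥0∞) (he : e < SigmaV V) :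
    IsClosed (Conf V k e) := by
  have h1 : IsClosed {c : Fin k → EReal × EReal | ∀ i, lambdaV V (Jset (c i).1 (c i).2) ≤ e} := by
    have : {c : Fin k → EReal × EReal | ∀ i, lambdaV V (Jset (c i).1 (c i).2) ≤ e} =
        ⋂ i, (fun c : Fin k → EReal × EReal => c i) ⁻¹'
          {p : EReal × EReal | lambdaV V (Jset p.1 p.2) ≤ e} := by
      ext c; simp
    rw [this]
    exact isClosed_iInter fun i =>
      (isClosed_sublevel V hloc hpos e he).preimage (continuous_apply i)
  have h2 : IsClosed {c : Fin k → EReal × EReal |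
      ∀ i j, i ≠ j → (c i).2 ≤ (c j).1 ∨ (c j).2 ≤ (c i).1} := by
    have : {c : Fin k → EReal × EReal |
        ∀ i j, i ≠ j → (c i).2 ≤ (c j).1 ∨ (c j).2 ≤ (c i).1} =
        ⋂ i, ⋂ j, ⋂ _ : i ≠ j, ({c : Fin k → EReal × EReal | (c i).2 ≤ (c j).1} ∪
          {c : Fin k → EReal × EReal | (c j).2 ≤ (c i).1}) := by
      ext c; simp
    rw [this]
    refine isClosed_iInter fun i => isClosed_iInter fun j => isClosed_iInter fun _ => ?_
    exact (isClosed_le (by fun_prop) (by fun_prop)).union (isClosed_le (by fun_prop) (by fun_prop))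
  exact h1.inter h2

lemma Conf_nonempty (V : ℝ → ℝ) (k : ℕ) (e : ℝ≥0∞) (he : optEnergyR V k < e) :
    (Conf V k e).Nonempty := by
  obtain ⟨⟨G, hG1, hG2, hG3, hG4⟩, hlt⟩ := iInf_lt_iff.1 he
  refine ⟨fun i => (sInf ((fun x : ℝ => (x : EReal)) '' G i),
    sSup ((fun x : ℝ => (x : EReal)) '' G i)), fun i => ?_, fun i j hij => ?_⟩
  · refine le_trans (lambdaV_mono V fun x hx => ?_) ((le_iSup (fun i => lambdaV V (G i)) i).trans hlt.le)
    exact ⟨sInf_le ⟨x, hx, rfl⟩, le_sSup ⟨x, hx, rfl⟩⟩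
  · rcases partition_sep (hG2 i) (hG2 j) (hG3 i) (hG3 j) (hG4 i j hij) with h | h
    · left
      apply sSup_le
      rintro _ ⟨x, hx, rfl⟩
      apply le_sInf
      rintro _ ⟨y, hy, rfl⟩
      exact EReal.coe_le_coe_iff.2 (h x hx y hy)
    · right
      apply sSup_le
      rintro _ ⟨x, hx, rfl⟩
      apply le_sInf
      rintro _ ⟨y, hy, rfl⟩
      exact EReal.coe_le_coe_iff.2 (h x hx y hy)

/-- **Theorem 1.3 for `G = ℝ`.** If `Δ*_k(ℝ) < Σ_V` then a spectral minimal `k`-partition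
of `ℝ` exists. -/
theorem exists_minimal_partition (V : ℝ → ℝ) (hmeas : Measurable V)
    (hloc : LocallyIntegrable V) (hpos : ∀ᵐ x ∂(volume : Measure ℝ), 0 ≤ V x)
    (k : ℕ) (hk : 1 ≤ k) (hlt : optEnergyR V k < SigmaV V) :
    ∃ G : Fin k → Set ℝ, IsPartitionR k G ∧ energyR V G = optEnergyR V k := by
  have hne : Nonempty (Ioo (optEnergyR V k) (SigmaV V)) := by
    obtain ⟨e, he⟩ := exists_between hlt
    exact ⟨⟨e, he⟩⟩
  have hmono : ∀ e e' : ℝ≥0∞, e ≤ e' → Conf V k e ⊆ Conf V k e' :=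
    fun e e' h c hc => ⟨fun i => (hc.1 i).trans h, hc.2⟩
  have hcl : ∀ e : Ioo (optEnergyR V k) (SigmaV V), IsClosed (Conf V k e) :=
    fun e => Conf_isClosed V hloc hpos k e e.2.2
  obtain ⟨c, hc⟩ := IsCompact.nonempty_iInter_of_directed_nonempty_isCompact_isClosed
    (fun e : Ioo (optEnergyR V k) (SigmaV V) => Conf V k e)
    (by
      intro e e'
      rcases le_total (e : ℝ≥0∞) e' with h | h
      · exact ⟨e, Subset.rfl, hmono _ _ h⟩
      · exact ⟨e', hmono _ _ h, Subset.rfl⟩)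
    (fun e => Conf_nonempty V k e e.2.1) (fun e => (hcl e).isCompact) hcl
  rw [mem_iInter] at hc
  have hle : ∀ i, lambdaV V (Jset (c i).1 (c i).2) ≤ optEnergyR V k := by
    intro i
    by_contra hcon
    rw [not_le] at hcon
    obtain ⟨e, he1, he2⟩ := exists_between (lt_min hcon hlt)
    rw [lt_min_iff] at he2
    exact absurd ((hc ⟨e, he1, he2.2⟩).1 i) (not_le.2 he2.1)
  have hsep := (hc (Classical.arbitrary _)).2
  have hInt : ∀ i, (interior (Jset (c i).1 (c i).2)).Nonempty := fun i =>
    Jset_interior V _ _ (lt_of_le_of_lt (hle i) (lt_top_of_lt hlt))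
  have hP : IsPartitionR k (fun i => Jset (c i).1 (c i).2) := by
    refine ⟨fun i => Jset_isClosed _ _, fun i => ⟨(hInt i).mono interior_subset,
      (Jset_ordConnected _ _).isPreconnected⟩, hInt, fun i j hij => ?_⟩
    rcases hsep i j hij with h | h
    · exact Jset_sep h
    · rw [inter_comm, inter_comm (frontier _)]
      exact Jset_sep h
  refine ⟨_, hP, le_antisymm (iSup_le hle) ?_⟩
  exact iInf_le (fun G : {G : Fin k → Set ℝ // IsPartitionR k G} => energyR V G.1) ⟨_, hP⟩
end

section
/- Let V : ℝ → ℝ be Borel measurable, locally integrable and nonnegative almost everywhere, and let λ be a real number with λ > Σ_V. Then there exists a sequence (I_i)_{i∈ℕ} of nondegenerate compact intervals in ℝ with pairwise intersections contained in their frontiers (so that they form an infinite partition of ℝ in the sense of the paper), such that λ_V(I_i) = λ for every i ∈ ℕ. In particular, ℝ admits a (not necessarily exhaustive) infinite equipartition of energy λ all of whose clusters are compact. (This is the paper's Theorem 1.6 for the metric graph G = ℝ.) -/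
open MeasureTheory Set Filter Topology
open scoped ENNReal

noncomputable def Nn (V f : ℝ → ℝ) : ℝ := ∫ x, ((deriv f x) ^ 2 + V x * (f x) ^ 2)

noncomputable def Dn (f : ℝ → ℝ) : ℝ := ∫ x, (f x) ^ 2

/-- There is a test function in `S` whose Rayleigh quotient is below `μ`. -/
def LowOn (V : ℝ → ℝ) (S : Set ℝ) (μ : ℝ) : Prop :=
  ∃ f : ℝ → ℝ, ContDiff ℝ 1 f ∧ HasCompactSupport f ∧ tsupport f ⊆ S ∧ Nn V f < μ * Dn f

lemma LowOn.mono {V : ℝ → ℝ} {S T : Set ℝ} {μ : ℝ} (h : LowOn V S μ) (hST : S ⊆ T) :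
    LowOn V T μ := by
  obtain ⟨f, h1, h2, h3, h4⟩ := h
  exact ⟨f, h1, h2, h3.trans hST, h4⟩

lemma int_sq {f : ℝ → ℝ} (hf : Continuous f) (hc : HasCompactSupport f) :
    Integrable (fun x => f x ^ 2) := by
  have h1 : HasCompactSupport (fun x => f x ^ 2) :=
    hc.comp_left (g := fun y : ℝ => y ^ 2) (by simp)
  have h3 : Continuous (fun x => f x ^ 2) := hf.pow 2
  exact h3.integrable_of_hasCompactSupport h1

lemma int_Vsq {V f : ℝ → ℝ} (hloc : LocallyIntegrable V) (hf : Continuous f)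
    (hc : HasCompactSupport f) : Integrable (fun x => V x * f x ^ 2) := by
  have h1 : HasCompactSupport (fun x => f x ^ 2) :=
    hc.comp_left (g := fun y : ℝ => y ^ 2) (by simp)
  have h3 : Continuous (fun x => f x ^ 2) := hf.pow 2
  exact hloc.integrable_smul_right_of_hasCompactSupport h3 h1

lemma int_d {f : ℝ → ℝ} (hf : ContDiff ℝ 1 f) (hc : HasCompactSupport f) :
    Integrable (fun x => deriv f x ^ 2) :=
  int_sq (hf.continuous_deriv le_rfl) hc.deriv

lemma int_N {V f : ℝ → ℝ} (hloc : LocallyIntegrable V) (hf : ContDiff ℝ 1 f)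
    (hc : HasCompactSupport f) : Integrable (fun x => deriv f x ^ 2 + V x * f x ^ 2) :=
  (int_d hf hc).add (int_Vsq hloc hf.continuous hc)

lemma Dn_pos {f : ℝ → ℝ} (hf : Continuous f) (hc : HasCompactSupport f) (h0 : f ≠ 0) :
    0 < Dn f := by
  obtain ⟨x, hx⟩ := Function.ne_iff.mp h0
  have h1 : HasCompactSupport (fun x => f x ^ 2) :=
    hc.comp_left (g := fun y : ℝ => y ^ 2) (by simp)
  have h2 : f x ^ 2 ≠ 0 := pow_ne_zero 2 hx
  have h3 : Continuous (fun x => f x ^ 2) := hf.pow 2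
  exact h3.integral_pos_of_hasCompactSupport_nonneg_nonzero h1 (fun x => sq_nonneg (f x)) h2

lemma Nn_nonneg {V f : ℝ → ℝ} (hpos : ∀ᵐ x ∂(volume : Measure ℝ), 0 ≤ V x) : 0 ≤ Nn V f := by
  apply integral_nonneg_of_ae
  filter_upwards [hpos] with x hx
  simp only [Pi.zero_apply]
  positivity

lemma lt_iff_low {V : ℝ → ℝ} (_hpos : ∀ᵐ x ∂(volume : Measure ℝ), 0 ≤ V x) {S : Set ℝ} {μ : ℝ}
    (hμ : 0 < μ) : lambdaV V S < ENNReal.ofReal μ ↔ LowOn V S μ := by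
  unfold lambdaV
  rw [sInf_lt_iff]
  constructor
  · rintro ⟨e, ⟨f, ⟨h1, h2, h3, h4⟩, rfl⟩, he⟩
    rw [ENNReal.ofReal_lt_ofReal_iff hμ] at he
    have hD := Dn_pos h1.continuous h3 h2
    exact ⟨f, h1, h3, h4, (div_lt_iff₀ hD).mp he⟩
  · rintro ⟨f, h1, h3, h4, h5⟩
    have h2 : f ≠ 0 := by
      rintro rfl
      simp [Nn, Dn] at h5
    have hD := Dn_pos h1.continuous h3 h2
    refine ⟨_, ⟨f, ⟨h1, h2, h3, h4⟩, rfl⟩, ?_⟩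
    rw [ENNReal.ofReal_lt_ofReal_iff hμ]
    exact (div_lt_iff₀ hD).mpr h5

lemma exists_psi (k : ℝ) (hk : 0 < k) : ∃ φ : ℝ → ℝ, ContDiff ℝ 1 φ ∧
    (∀ s, |s| ≤ k → φ s = 0) ∧ (∀ s, (deriv φ s) ^ 2 ≤ 1) ∧ (∀ s, φ s ^ 2 ≤ s ^ 2) ∧
    (∀ s, s ^ 2 - 4 * k * |s| ≤ φ s ^ 2) := by
  set p : ℝ → ℝ := fun s => min 1 (max 0 (s / k - 1)) with hp
  have hpc : Continuous p := by fun_prop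
  have hp0 : ∀ s, 0 ≤ p s := fun s => le_min zero_le_one (le_max_left _ _)
  have hp1 : ∀ s, p s ≤ 1 := fun s => min_le_left _ _
  have hpz : ∀ s, s ≤ k → p s = 0 := by
    intro s hs
    have : s / k ≤ 1 := (div_le_one hk).mpr hs
    simp only [hp]
    rw [max_eq_left (by linarith)]
    simp
  have hpo : ∀ s, 2 * k ≤ s → p s = 1 := by
    intro s hs
    have : 2 ≤ s / k := (le_div_iff₀ hk).mpr hs
    simp only [hp]
    rw [max_eq_right (by linarith), min_eq_left (by linarith)]
  set ψ : ℝ → ℝ := fun s => ∫ t in (0:ℝ)..s, p t with hψ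
  have hd : ∀ s, HasDerivAt ψ (p s) s := fun s => hpc.integral_hasStrictDerivAt 0 s |>.hasDerivAt
  have hψz : ∀ s, s ≤ k → ψ s = 0 := by
    intro s hs
    simp only [hψ]
    rw [intervalIntegral.integral_congr (g := fun _ => (0:ℝ))]
    · simp
    · intro t ht
      apply hpz
      have := ht.2
      exact this.trans (max_le hk.le hs)
  have hmono : Monotone ψ := monotone_of_hasDerivAt_nonneg hd hp0
  have hψ0 : ∀ s, 0 ≤ ψ s := by
    intro s
    rcases le_total s k with h | h
    · rw [hψz s h]
    · rw [← hψz k le_rfl]; exact hmono h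
  have hmono2 : Monotone (fun s => s - ψ s) :=
    monotone_of_hasDerivAt_nonneg (f' := fun s => 1 - p s)
      (fun s => (hasDerivAt_id s).sub (hd s)) (fun s => sub_nonneg.mpr (hp1 s))
  have hψle : ∀ s, 0 ≤ s → ψ s ≤ s := by
    intro s hs
    have := hmono2 hs
    simp only [hψz 0 hk.le] at this
    linarith
  have hψge : ∀ s, s - 2 * k ≤ ψ s := by
    intro s
    rcases le_total s (2 * k) with h | h
    · linarith [hψ0 s]
    · have h1 : ψ s = ψ (2 * k) + ∫ t in (2*k)..s, p t := by
        simp only [hψ]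
        rw [intervalIntegral.integral_add_adjacent_intervals] <;>
          exact hpc.intervalIntegrable _ _
      have h2 : ∫ t in (2*k)..s, p t = ∫ t in (2*k)..s, (1:ℝ) := by
        apply intervalIntegral.integral_congr
        intro t ht
        rw [uIcc_of_le h] at ht
        exact hpo t ht.1
      rw [h2] at h1
      simp at h1
      linarith [hψ0 (2 * k)]
  have hφd : ∀ s, HasDerivAt (fun s => ψ s + ψ (-s)) (p s - p (-s)) s := by
    intro s
    have h2 := (hd (-s)).comp s (hasDerivAt_neg s)
    have h3 := (hd s).add h2
    have h4 : p s - p (-s) = p s + p (-s) * -1 := by ring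
    rw [h4]
    exact h3
  have hder : deriv (fun s => ψ s + ψ (-s)) = fun s => p s - p (-s) := by
    ext s; exact (hφd s).deriv
  have hsym : ∀ s, ψ s + ψ (-s) = ψ |s| := by
    intro s
    rcases le_total 0 s with h | h
    · rw [abs_of_nonneg h, hψz (-s) (by linarith)]; ring
    · rw [abs_of_nonpos h, hψz s (by linarith)]; ring
  refine ⟨fun s => ψ s + ψ (-s), ?_, ?_, ?_, ?_, ?_⟩
  · rw [contDiff_one_iff_deriv]
    refine ⟨fun s => (hφd s).differentiableAt, ?_⟩
    rw [hder]; fun_prop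
  · intro s hs
    simp only [hsym]
    exact hψz _ hs
  · intro s
    rw [hder]
    have := hp0 s; have := hp0 (-s); have := hp1 s; have := hp1 (-s)
    simp only
    rw [sq_le_one_iff_abs_le_one, abs_le]
    constructor <;> linarith
  · intro s
    simp only [hsym]
    rw [← sq_abs s]
    exact pow_le_pow_left₀ (hψ0 _) (hψle _ (abs_nonneg s)) 2
  · intro s
    simp only [hsym]
    rw [← sq_abs s]
    have h1 := hψge |s|
    have h2 := hψ0 |s|
    have h3 := abs_nonneg s
    rcases le_total |s| (2 * k) with h | h
    · nlinarith
    · nlinarith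

lemma trunc {V : ℝ → ℝ} (hloc : LocallyIntegrable V)
    (hpos : ∀ᵐ x ∂(volume : Measure ℝ), 0 ≤ V x) {f : ℝ → ℝ} {a b s c μ : ℝ}
    (hf : ContDiff ℝ 1 f) (hc : HasCompactSupport f) (hsupp : tsupport f ⊆ Icc a b)
    (hab : a ≤ b) (hμ : 0 < μ) (hN : Nn V f < μ * Dn f) (hc0 : 0 < c)
    (hq : 0 < 1 - 2 * c * (1 + (b - a)))
    (hsm : ∀ x, s ≤ x → x ≤ b → f x ^ 2 ≤ c ^ 2 * Dn f) :
    LowOn V (Icc a s) (μ / (1 - 2 * c * (1 + (b - a)))) := by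
  have hD : 0 < Dn f := by
    have := Nn_nonneg (f := f) hpos
    by_contra h
    nlinarith
  have hfz : ∀ x, x ∉ Icc a b → f x = 0 := fun x hx =>
    image_eq_zero_of_notMem_tsupport (fun h => hx (hsupp h))
  set r := √(Dn f) with hr
  have hr0 : 0 < r := Real.sqrt_pos.mpr hD
  have hr2 : r ^ 2 = Dn f := Real.sq_sqrt hD.le
  obtain ⟨φ, p1, p2, p3, p4, p5⟩ := exists_psi (c * r) (by positivity)
  have hφ0 : φ 0 = 0 := p2 0 (by simp; positivity)
  have hgC : ContDiff ℝ 1 (φ ∘ f) := p1.comp hf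
  have hgc : HasCompactSupport (φ ∘ f) := hc.comp_left hφ0
  refine ⟨φ ∘ f, hgC, hgc, ?_, ?_⟩
  · apply closure_minimal _ isClosed_Icc
    intro x hx
    by_contra hxs
    apply hx
    by_cases hxb : x ∈ Icc a b
    · have h1 : s < x := by
        by_contra h; exact hxs ⟨hxb.1, not_lt.mp h⟩
      apply p2
      apply abs_le_of_sq_le_sq _ (by positivity)
      rw [mul_pow, hr2]
      exact hsm x h1.le hxb.2
    · simp [hfz x hxb, hφ0]
  · have hN' : Nn V (φ ∘ f) ≤ Nn V f := by
      apply integral_mono_ae (int_N hloc hgC hgc) (int_N hloc hf hc)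
      filter_upwards [hpos] with x hx
      have hd : deriv (φ ∘ f) x = deriv φ (f x) * deriv f x :=
        deriv_comp x (p1.differentiable one_ne_zero _) (hf.differentiable one_ne_zero _)
      simp only [hd, Function.comp]
      apply add_le_add
      · rw [mul_pow]
        have := p3 (f x)
        nlinarith [sq_nonneg (deriv f x)]
      · exact mul_le_mul_of_nonneg_left (p4 _) hx
    have hD' : Dn f * (1 - 2 * c * (1 + (b - a))) ≤ Dn (φ ∘ f) := by
      have hi : Integrable ((Icc a b).indicator (fun _ => 2 * c * Dn f)) := by
        rw [integrable_indicator_iff measurableSet_Icc]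
        exact continuous_const.integrableOn_Icc
      have h1 : ∫ x, ((1 - 2 * c) * f x ^ 2 - (Icc a b).indicator (fun _ => 2 * c * Dn f) x)
          ≤ Dn (φ ∘ f) := by
        apply integral_mono (((int_sq hf.continuous hc).const_mul _).sub hi)
          (int_sq hgC.continuous hgc)
        intro x
        by_cases hx : x ∈ Icc a b
        · change (1 - 2 * c) * f x ^ 2 - (Icc a b).indicator (fun _ => 2 * c * Dn f) x
            ≤ φ (f x) ^ 2
          rw [indicator_of_mem hx]
          have h5 := p5 (f x)
          rw [← hr2]
          rw [← sq_abs (f x)] at h5 ⊢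
          nlinarith [mul_nonneg hc0.le (sq_nonneg (|f x| - r))]
        · change (1 - 2 * c) * f x ^ 2 - (Icc a b).indicator (fun _ => 2 * c * Dn f) x
            ≤ φ (f x) ^ 2
          rw [indicator_of_notMem hx, hfz x hx, hφ0]
          simp
      rw [integral_sub ((int_sq hf.continuous hc).const_mul _) hi, integral_const_mul,
        integral_indicator measurableSet_Icc] at h1
      simp [hab] at h1
      change (1 - 2 * c) * Dn f ≤ _ at h1
      linarith
    calc Nn V (φ ∘ f) ≤ Nn V f := hN'
      _ < μ * Dn f := hN
      _ = μ / (1 - 2 * c * (1 + (b - a))) * (Dn f * (1 - 2 * c * (1 + (b - a)))) := by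
        field_simp
      _ ≤ _ := mul_le_mul_of_nonneg_left hD' (by positivity)

lemma sq_bound {V : ℝ → ℝ} (hloc : LocallyIntegrable V)
    (hpos : ∀ᵐ x ∂(volume : Measure ℝ), 0 ≤ V x) {f : ℝ → ℝ}
    (hf : ContDiff ℝ 1 f) (hc : HasCompactSupport f) {x y : ℝ} (hxy : x ≤ y) :
    (f y - f x) ^ 2 ≤ (y - x) * Nn V f := by
  rcases hxy.eq_or_lt with rfl | hlt
  · simp
  have hdc := hf.continuous_deriv le_rfl
  have hF : ∫ t in x..y, deriv f t = f y - f x :=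
    intervalIntegral.integral_deriv_eq_sub (fun t _ => hf.differentiable one_ne_zero t)
      (hdc.intervalIntegrable _ _)
  have h1 : ∫ t in x..y, deriv f t ^ 2 ≤ Nn V f := by
    rw [intervalIntegral.integral_of_le hxy]
    calc _ ≤ ∫ t, deriv f t ^ 2 :=
          setIntegral_le_integral (int_d hf hc) (Eventually.of_forall fun t => sq_nonneg _)
      _ ≤ _ := by
          apply integral_mono_ae (int_d hf hc) (int_N hloc hf hc)
          filter_upwards [hpos] with t ht
          have : 0 ≤ V t * f t ^ 2 := by positivity
          simpa using this
  set L := y - x with hL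
  have hL0 : 0 < L := sub_pos.mpr hlt
  set F := f y - f x with hFdef
  have h2 : 0 ≤ ∫ t in x..y, (deriv f t - F / L) ^ 2 :=
    intervalIntegral.integral_nonneg hxy (fun t _ => sq_nonneg _)
  have h3 : ∫ t in x..y, (deriv f t - F / L) ^ 2 =
      (∫ t in x..y, deriv f t ^ 2) - 2 * (F / L) * F + L * (F / L) ^ 2 := by
    have : ∀ t, (deriv f t - F / L) ^ 2 = deriv f t ^ 2 - 2 * (F / L) * deriv f t + (F / L) ^ 2 :=
      fun t => by ring
    simp_rw [this]
    rw [intervalIntegral.integral_add, intervalIntegral.integral_sub,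
      intervalIntegral.integral_const_mul, hF, intervalIntegral.integral_const, smul_eq_mul]
    all_goals
      apply Continuous.intervalIntegrable
      fun_prop
  have h4 : F ^ 2 / L ≤ ∫ t in x..y, deriv f t ^ 2 := by
    rw [h3] at h2
    have : 2 * (F / L) * F - L * (F / L) ^ 2 = F ^ 2 / L := by field_simp; ring
    linarith
  have h5 : F ^ 2 / L ≤ Nn V f := h4.trans h1
  rw [div_le_iff₀ hL0] at h5
  linarith

lemma poincare {V : ℝ → ℝ} (hloc : LocallyIntegrable V)
    (hpos : ∀ᵐ x ∂(volume : Measure ℝ), 0 ≤ V x) {a t lam : ℝ} (hat : a ≤ t)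
    (hlam : 0 < lam) (h : (t - a) ^ 2 * lam ≤ 1) : ¬ LowOn V (Icc a t) lam := by
  rintro ⟨f, hf, hc, hs, hN⟩
  have hfz : ∀ x, x ∉ Icc a t → f x = 0 := fun x hx =>
    image_eq_zero_of_notMem_tsupport (fun h => hx (hs h))
  have hfa : ∀ x, a ≤ x → f x ^ 2 ≤ (x - a) * Nn V f := by
    have hz : f a = 0 := by
      have hcl : IsClosed {x | f x = 0} := isClosed_eq hf.continuous continuous_const
      have : Iio a ⊆ {x | f x = 0} := fun x hx => hfz x (fun h => absurd hx (not_lt.mpr h.1))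
      have h2 := closure_minimal this hcl
      rw [closure_Iio] at h2
      exact h2 (mem_Iic.mpr le_rfl)
    intro x hx
    have := sq_bound hloc hpos hf hc hx
    simpa [hz] using this
  have hN0 := Nn_nonneg (f := f) hpos
  have hD : Dn f ≤ (t - a) ^ 2 * Nn V f := by
    have hi : Integrable ((Icc a t).indicator (fun _ => (t - a) * Nn V f)) := by
      rw [integrable_indicator_iff measurableSet_Icc]
      exact continuous_const.integrableOn_Icc
    have h1 : Dn f ≤ ∫ x, (Icc a t).indicator (fun _ => (t - a) * Nn V f) x := by
      apply integral_mono (int_sq hf.continuous hc) hi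
      intro x
      by_cases hx : x ∈ Icc a t
      · simp only [indicator_of_mem hx]
        exact (hfa x hx.1).trans (mul_le_mul_of_nonneg_right (by linarith [hx.2]) hN0)
      · simp [hfz x hx, indicator_of_notMem hx]
    rw [integral_indicator measurableSet_Icc] at h1
    simp [hat] at h1
    linarith
  have : lam * Dn f ≤ lam * ((t - a) ^ 2 * Nn V f) := mul_le_mul_of_nonneg_left hD hlam.le
  nlinarith

lemma shrink {V : ℝ → ℝ} (hloc : LocallyIntegrable V)
    (hpos : ∀ᵐ x ∂(volume : Measure ℝ), 0 ≤ V x) {a b lam : ℝ} (hlam : 0 < lam) (hab : a < b)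
    (h : LowOn V (Icc a b) lam) :
    ∃ t, a < t ∧ t ≤ b ∧ lambdaV V (Icc a t) = ENNReal.ofReal lam := by
  set T : Set ℝ := {t | a ≤ t ∧ t ≤ b ∧ ¬ LowOn V (Icc a t) lam} with hT
  obtain ⟨t0, ht0a, ht0⟩ : ∃ t0, a < t0 ∧ t0 ∈ T := by
    refine ⟨min b (a + 1 / (1 + lam)), lt_min hab (by linarith [show 0 < 1 / (1 + lam) by positivity]),
      le_min hab.le (by linarith [show 0 < 1 / (1 + lam) by positivity]), min_le_left _ _, ?_⟩
    have h0 : a ≤ min b (a + 1 / (1 + lam)) :=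
      le_min hab.le (by linarith [show 0 < 1 / (1 + lam) by positivity])
    apply poincare hloc hpos h0 hlam
    have h1 : min b (a + 1 / (1 + lam)) - a ≤ 1 / (1 + lam) := by
      linarith [min_le_right b (a + 1 / (1 + lam))]
    have h2 : (min b (a + 1 / (1 + lam)) - a) ^ 2 ≤ (1 / (1 + lam)) ^ 2 :=
      pow_le_pow_left₀ (by linarith) h1 2
    calc _ ≤ (1 / (1 + lam)) ^ 2 * lam := mul_le_mul_of_nonneg_right h2 hlam.le
      _ ≤ 1 := by
        rw [div_pow, div_mul_eq_mul_div, div_le_one (by positivity)]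
        nlinarith
  have hbdd : BddAbove T := ⟨b, fun t ht => ht.2.1⟩
  set τ := sSup T with hτ
  have haτ : a < τ := ht0a.trans_le (le_csSup hbdd ht0)
  have hτb : τ ≤ b := csSup_le ⟨t0, ht0⟩ (fun t ht => ht.2.1)
  refine ⟨τ, haτ, hτb, le_antisymm ?_ ?_⟩
  · by_contra hcon
    rw [not_le, ENNReal.lt_iff_exists_real_btwn] at hcon
    obtain ⟨μ, -, hμ1, hμ2⟩ := hcon
    have hμ0 : lam < μ := (ENNReal.ofReal_lt_ofReal_iff_of_nonneg hlam.le).mp hμ1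
    have hnot : ¬ LowOn V (Icc a τ) μ := by
      rw [← lt_iff_low hpos (hlam.trans hμ0)]
      exact not_lt.mpr hμ2.le
    have key : ∀ ν, lam ≤ ν → LowOn V (Icc a τ) ν → ν < μ → False := by
      rintro ν hν ⟨f, h1, h2, h3, h4⟩ hνμ
      apply hnot
      refine ⟨f, h1, h2, h3, h4.trans_le ?_⟩
      exact mul_le_mul_of_nonneg_right hνμ.le (integral_nonneg fun x => sq_nonneg _)
    rcases hτb.eq_or_lt with heq | hlt
    · rw [← heq] at h
      exact key lam le_rfl h hμ0
    -- choose t slightly larger than τ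
    have hcont : Tendsto (fun t => lam / (1 - 2 * √((t - τ) * lam) * (1 + (t - a)))) (𝓝[>] τ)
        (𝓝 lam) := by
      have : ContinuousAt (fun t => lam / (1 - 2 * √((t - τ) * lam) * (1 + (t - a)))) τ := by
        apply ContinuousAt.div (by fun_prop) (by fun_prop)
        simp
      have h2 := this.tendsto
      simp at h2
      exact h2.mono_left nhdsWithin_le_nhds
    have hcont2 : Tendsto (fun t => (1 - 2 * √((t - τ) * lam) * (1 + (t - a)))) (𝓝[>] τ)
        (𝓝 1) := by
      have : ContinuousAt (fun t => (1 - 2 * √((t - τ) * lam) * (1 + (t - a)))) τ := by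
        fun_prop
      have h2 := this.tendsto
      simp at h2
      exact h2.mono_left nhdsWithin_le_nhds
    obtain ⟨t, ht1, ht2, ht3, ht4⟩ := ((hcont.eventually (gt_mem_nhds hμ0)).and
      ((hcont2.eventually (lt_mem_nhds zero_lt_one)).and
      ((eventually_nhdsWithin_of_eventually_nhds (gt_mem_nhds hlt)).and self_mem_nhdsWithin))).exists
    have ht4 : τ < t := ht4
    have hlow : LowOn V (Icc a t) lam := by
      by_contra hno
      have : t ∈ T := ⟨(haτ.trans ht4).le, ht3.le, hno⟩
      exact absurd (le_csSup hbdd this) (not_le.mpr ht4)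
    obtain ⟨f, h1, h2, h3, h4⟩ := hlow
    have hfz : f t = 0 := by
      have hcl : IsClosed {x | f x = 0} := isClosed_eq h1.continuous continuous_const
      have : Ioi t ⊆ {x | f x = 0} := fun x hx =>
        image_eq_zero_of_notMem_tsupport (fun h => absurd (h3 h).2 (not_le.mpr hx))
      have h2 := closure_minimal this hcl
      rw [closure_Ioi] at h2
      exact h2 (mem_Ici.mpr le_rfl)
    have hc0 : 0 < (t - τ) * lam := mul_pos (by linarith) hlam
    have hN0 := Nn_nonneg (f := f) hpos
    have hL := trunc hloc hpos (s := τ) (c := √((t - τ) * lam)) h1 h2 h3 (haτ.trans ht4).le hlam h4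
      (Real.sqrt_pos.mpr hc0) ht2 (by
        intro x hx1 hx2
        have := sq_bound hloc hpos h1 h2 hx2
        rw [hfz] at this
        rw [Real.sq_sqrt hc0.le]
        calc f x ^ 2 = (0 - f x) ^ 2 := by ring
          _ ≤ (t - x) * Nn V f := this
          _ ≤ (t - τ) * Nn V f := mul_le_mul_of_nonneg_right (by linarith) hN0
          _ ≤ (t - τ) * (lam * Dn f) := mul_le_mul_of_nonneg_left h4.le (by linarith)
          _ = _ := by ring)
    refine key _ ?_ hL ht1
    rw [le_div_iff₀ ht2]
    have : 0 ≤ 2 * √((t - τ) * lam) * (1 + (t - a)) := by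
      have : 0 ≤ t - a := by linarith
      positivity
    nlinarith
  · rw [← not_lt, lt_iff_low hpos hlam]
    rintro ⟨f, h1, h2, h3, h4⟩
    have hfz : f τ = 0 := by
      have hcl : IsClosed {x | f x = 0} := isClosed_eq h1.continuous continuous_const
      have : Ioi τ ⊆ {x | f x = 0} := fun x hx =>
        image_eq_zero_of_notMem_tsupport (fun h => absurd (h3 h).2 (not_le.mpr hx))
      have h2 := closure_minimal this hcl
      rw [closure_Ioi] at h2
      exact h2 (mem_Ici.mpr le_rfl)
    have hN0 := Nn_nonneg (f := f) hpos
    have hD : 0 < Dn f := by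
      by_contra h
      nlinarith
    -- intermediate level
    obtain ⟨ν, hν1, hν2⟩ := exists_between ((div_lt_iff₀ hD).mpr h4)
    have hν0 : 0 < ν := (div_nonneg hN0 hD.le).trans_lt hν1
    have h4' : Nn V f < ν * Dn f := (div_lt_iff₀ hD).mp hν1
    have hcont : Tendsto (fun c => 1 - 2 * c * (1 + (τ - a))) (𝓝[>] 0) (𝓝 1) := by
      have : ContinuousAt (fun c : ℝ => 1 - 2 * c * (1 + (τ - a))) 0 := by fun_prop
      have h2 := this.tendsto
      simp at h2
      exact h2.mono_left nhdsWithin_le_nhds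
    have hνl : ν / lam < 1 := (div_lt_one hlam).mpr hν2
    obtain ⟨c, hc1, hc0⟩ := ((hcont.eventually (lt_mem_nhds hνl)).and self_mem_nhdsWithin).exists
    have hc0 : 0 < c := hc0
    have hq : 0 < 1 - 2 * c * (1 + (τ - a)) := (div_pos hν0 hlam).trans hc1
    have hev : ∀ᶠ x in 𝓝 τ, f x ^ 2 < c ^ 2 * Dn f := by
      have : ContinuousAt (fun x => f x ^ 2) τ := (h1.continuous.pow 2).continuousAt
      have h0 : f τ ^ 2 < c ^ 2 * Dn f := by
        rw [hfz]
        have : 0 < c ^ 2 * Dn f := by positivity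
        simpa using this
      exact this.eventually (gt_mem_nhds h0)
    obtain ⟨δ, hδ, hδ2⟩ := Metric.eventually_nhds_iff.mp hev
    have hL := trunc hloc hpos (s := τ - δ / 2) h1 h2 h3 haτ.le hν0 h4' hc0 hq (by
      intro x hx1 hx2
      apply (hδ2 _).le
      rw [Real.dist_eq, abs_lt]
      constructor <;> linarith)
    obtain ⟨t, htT, ht⟩ := exists_lt_of_lt_csSup ⟨t0, ht0⟩ (show τ - δ / 2 < sSup T by linarith)
    apply htT.2.2
    obtain ⟨g, g1, g2, g3, g4⟩ := hL.mono (Icc_subset_Icc_right ht.le)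
    refine ⟨g, g1, g2, g3, g4.trans_le ?_⟩
    apply mul_le_mul_of_nonneg_right _ (integral_nonneg fun x => sq_nonneg _)
    rw [div_le_iff₀ hq]
    rw [div_lt_iff₀ hlam] at hc1
    linarith

lemma split {V : ℝ → ℝ} (hloc : LocallyIntegrable V) {R lam : ℝ} (hR : 0 < R)
    (h : LowOn V {x : ℝ | R ≤ |x|} lam) :
    ∃ M, R < M ∧ (LowOn V (Icc R M) lam ∨ LowOn V (Icc (-M) (-R)) lam) := by
  obtain ⟨f, h1, h2, h3, h4⟩ := h
  obtain ⟨M0, hM0⟩ := h2.isCompact.isBounded.subset_closedBall 0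
  have hfz : ∀ x, |x| < R → f x = 0 := fun x hx =>
    image_eq_zero_of_notMem_tsupport (fun h => absurd (h3 h) (not_le.mpr hx))
  set M := max M0 (R + 1) with hM
  have hfM : ∀ x, M < |x| → f x = 0 := fun x hx =>
    image_eq_zero_of_notMem_tsupport (fun h => by
      have := hM0 h
      rw [mem_closedBall_zero_iff, Real.norm_eq_abs] at this
      linarith [le_max_left M0 (R + 1)])
  have hRM : R < M := by linarith [le_max_right M0 (R + 1)]
  refine ⟨M, hRM, ?_⟩
  set p : ℝ → ℝ := fun x => if 0 ≤ x then f x else 0 with hp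
  set n : ℝ → ℝ := fun x => if 0 ≤ x then 0 else f x with hn
  have hp1 : ∀ x, x < R → p x = 0 := by
    intro x hx
    simp only [hp]
    split_ifs with h
    · exact hfz x (abs_lt.mpr ⟨by linarith, hx⟩)
    · rfl
  have hp2 : ∀ x, -R < x → p x = f x := by
    intro x hx
    simp only [hp]
    split_ifs with h
    · rfl
    · exact (hfz x (abs_lt.mpr ⟨hx, by linarith⟩)).symm
  have hn1 : ∀ x, -R < x → n x = 0 := by
    intro x hx
    simp only [hn]
    split_ifs with h
    · rfl
    · exact hfz x (abs_lt.mpr ⟨hx, by linarith⟩)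
  have hn2 : ∀ x, x < R → n x = f x := by
    intro x hx
    simp only [hn]
    split_ifs with h
    · exact (hfz x (abs_lt.mpr ⟨by linarith, hx⟩)).symm
    · rfl
  have ep1 : ∀ x, x < R → p =ᶠ[𝓝 x] 0 := fun x hx => by
    filter_upwards [gt_mem_nhds hx] with y hy using hp1 y hy
  have ep2 : ∀ x, -R < x → p =ᶠ[𝓝 x] f := fun x hx => by
    filter_upwards [lt_mem_nhds hx] with y hy using hp2 y hy
  have en1 : ∀ x, -R < x → n =ᶠ[𝓝 x] 0 := fun x hx => by
    filter_upwards [lt_mem_nhds hx] with y hy using hn1 y hy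
  have en2 : ∀ x, x < R → n =ᶠ[𝓝 x] f := fun x hx => by
    filter_upwards [gt_mem_nhds hx] with y hy using hn2 y hy
  have cz : ContDiff ℝ 1 (0 : ℝ → ℝ) := contDiff_const
  have hpC : ContDiff ℝ 1 p := by
    rw [contDiff_iff_contDiffAt]
    intro x
    rcases lt_or_ge x R with h | h
    · exact cz.contDiffAt.congr_of_eventuallyEq (ep1 x h)
    · exact h1.contDiffAt.congr_of_eventuallyEq (ep2 x (by linarith))
  have hnC : ContDiff ℝ 1 n := by
    rw [contDiff_iff_contDiffAt]
    intro x
    rcases lt_or_ge x R with h | h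
    · exact h1.contDiffAt.congr_of_eventuallyEq (en2 x h)
    · exact cz.contDiffAt.congr_of_eventuallyEq (en1 x (by linarith))
  have hpS : tsupport p ⊆ Icc R M := by
    apply closure_minimal _ isClosed_Icc
    intro x hx
    by_contra hxs
    apply hx
    rcases lt_or_ge x R with h | h
    · exact hp1 x h
    · have : M < x := by
        by_contra h'; exact hxs ⟨h, not_lt.mp h'⟩
      rw [hp2 x (by linarith)]
      exact hfM x (this.trans_le (le_abs_self x))
  have hnS : tsupport n ⊆ Icc (-M) (-R) := by
    apply closure_minimal _ isClosed_Icc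
    intro x hx
    by_contra hxs
    apply hx
    rcases lt_or_ge (-R) x with h | h
    · exact hn1 x h
    · have : x < -M := by
        by_contra h'; exact hxs ⟨not_lt.mp h', h⟩
      rw [hn2 x (by linarith)]
      exact hfM x (by linarith [neg_le_abs x])
  have hpc : HasCompactSupport p := isCompact_Icc.of_isClosed_subset (isClosed_tsupport p) hpS
  have hnc : HasCompactSupport n := isCompact_Icc.of_isClosed_subset (isClosed_tsupport n) hnS
  have hDD : Dn f = Dn p + Dn n := by
    unfold Dn
    rw [← integral_add (int_sq hpC.continuous hpc) (int_sq hnC.continuous hnc)]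
    congr 1
    ext x
    simp only [hp, hn]
    split_ifs <;> simp
  have hNN : Nn V f = Nn V p + Nn V n := by
    unfold Nn
    rw [← integral_add (int_N hloc hpC hpc) (int_N hloc hnC hnc)]
    congr 1
    ext x
    rcases lt_or_ge x R with h | h
    · rw [(ep1 x h).deriv_eq, (en2 x h).deriv_eq, hp1 x h, hn2 x h]
      simp
    · have h' : -R < x := by linarith
      rw [(ep2 x h').deriv_eq, (en1 x h').deriv_eq, hp2 x h', hn1 x h']
      simp
  by_cases hcase : Nn V p < lam * Dn p
  · exact Or.inl ⟨p, hpC, hpc, hpS, hcase⟩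
  · refine Or.inr ⟨n, hnC, hnc, hnS, ?_⟩
    rw [hDD, hNN] at h4
    linarith

lemma step {V : ℝ → ℝ} (hloc : LocallyIntegrable V)
    (hpos : ∀ᵐ x ∂(volume : Measure ℝ), 0 ≤ V x) {lam : ℝ}
    (hlam : SigmaV V < ENNReal.ofReal lam) (R : ℝ) :
    ∃ q : ℝ × ℝ × ℝ, q.1 < q.2.1 ∧ lambdaV V (Icc q.1 q.2.1) = ENNReal.ofReal lam ∧
      R < q.2.2 ∧ ∀ x ∈ Icc q.1 q.2.1, R < |x| ∧ |x| ≤ q.2.2 := by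
  have hl : 0 < lam := ENNReal.ofReal_pos.mp (bot_le.trans_lt hlam)
  set R' := max R 0 + 1 with hR'
  have hRR : R < R' := by linarith [le_max_left R 0]
  have hR0 : 0 < R' := by linarith [le_max_right R 0]
  have hlow : LowOn V {x : ℝ | R' ≤ |x|} lam := by
    rw [← lt_iff_low hpos hl]
    refine lt_of_le_of_lt ?_ hlam
    exact le_iSup₂_of_le (f := fun (R : ℝ) (_ : 0 < R) => lambdaV V {x : ℝ | R ≤ |x|}) R' hR0 le_rfl
  obtain ⟨M, hM, h | h⟩ := split hloc hR0 hlow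
  · obtain ⟨t, h1, h2, h3⟩ := shrink hloc hpos hl hM h
    refine ⟨(R', t, M), h1, h3, hRR.trans hM, ?_⟩
    intro x hx
    have ha : R' ≤ x := hx.1
    have hb : x ≤ t := hx.2
    rw [abs_of_nonneg (by linarith)]
    exact ⟨by linarith, by simp only; linarith⟩
  · obtain ⟨t, h1, h2, h3⟩ := shrink hloc hpos hl (neg_lt_neg hM) h
    refine ⟨(-M, t, M), h1, h3, hRR.trans hM, ?_⟩
    intro x hx
    have ha : -M ≤ x := hx.1
    have hb : x ≤ t := hx.2
    rw [abs_of_nonpos (by linarith)]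
    exact ⟨by linarith, by simp only; linarith⟩

/-- **Theorem 1.6 for `G = ℝ`.** For every real `λ > Σ_V` there exists an infinite
equipartition of `ℝ` of energy `λ` into nondegenerate compact intervals, with pairwise
intersections contained in the respective frontiers. -/
theorem exists_infinite_equipartition (V : ℝ → ℝ) (hmeas : Measurable V)
    (hloc : LocallyIntegrable V) (hpos : ∀ᵐ x ∂(volume : Measure ℝ), 0 ≤ V x)
    (lam : ℝ) (hlam : SigmaV V < ENNReal.ofReal lam) :
    ∃ a b : ℕ → ℝ, (∀ i, a i < b i) ∧
      (∀ i j, i ≠ j →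
        Set.Icc (a i) (b i) ∩ Set.Icc (a j) (b j) ⊆
          frontier (Set.Icc (a i) (b i)) ∩ frontier (Set.Icc (a j) (b j))) ∧
      ∀ i, lambdaV V (Set.Icc (a i) (b i)) = ENNReal.ofReal lam := by
  choose q hq1 hq2 hq3 hq4 using step hloc hpos hlam
  let r : ℕ → ℝ := fun i => Nat.rec 0 (fun _ R => (q R).2.2) i
  have hr : ∀ i, r (i + 1) = (q (r i)).2.2 := fun i => rfl
  have hmono : Monotone r := monotone_nat_of_le_succ fun i => by
    rw [hr]; exact (hq3 _).le
  have hdisj : ∀ i j, i < j → ∀ x, x ∈ Set.Icc (q (r i)).1 (q (r i)).2.1 →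
      x ∈ Set.Icc (q (r j)).1 (q (r j)).2.1 → False := by
    intro i j hij x hx hy
    have h1 := (hq4 (r i) x hx).2
    have h2 := (hq4 (r j) x hy).1
    have h3 := hmono (Nat.succ_le_of_lt hij)
    rw [Nat.succ_eq_add_one, hr] at h3
    linarith
  refine ⟨fun i => (q (r i)).1, fun i => (q (r i)).2.1, fun i => hq1 _, ?_, fun i => hq2 _⟩
  rintro i j hij x ⟨hx, hy⟩
  rcases lt_or_gt_of_ne hij with h | h
  · exact (hdisj i j h x hx hy).elim
  · exact (hdisj j i h x hy hx).elim
end
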